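/- arXiv:1204.4397 — 3 statements merged into one kernel-verified Lean document; each statement's English description precedes it below -/
import Mathlib

section
/- Let (u, v) be a C² solution of the p-system, let i ∈ {1, 2}, and let x : [t₀, ∞) → ℝ be a characteristic curve of the i-th eigenvalue defined on the whole semi-infinite interval [t₀, ∞). Then either ∂rᵢ/∂x (t, x(t)) ≤ 0 for all t ≥ t₀, or −u(t, x(t)) → +∞ as t → +∞. -/
/-!
Write `c(u) = √(-p'(u))`, `R₁ = v - q(u)`, `R₋₁ = v + q(u)`. By the symmetry `x ↦ -x`, `v ↦ -v` it
suffices to treat a characteristic `Γ` of speed `c`. With `Y_σ = √c ∂ₓR_σ` the differentiated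
transport equation becomes the Riccati equation `Y_σ' = a(u) Y_σ²` with `a > 0`, along
characteristics of speed `σ c` (`Sol.Y_along`). Suppose `∂ₓR₁ > 0` at some point of `Γ`, hence at
all later ones, while `-u` does not tend to `∞`.

* Along `Γ` the positive function `1 / Y₁` decreases at the rate `a(u)`, which is bounded below
  while `u` is bounded. So `u` is bounded only for a finite total time, and returns to `(-M, 0)`
  take place ever faster; as `p(u)' = c² ∂ₓR₋₁` along `Γ`, there are points of `Γ`, arbitrarily
  late, where `u ≥ -2M` and `Y₋₁` is as negative as desired (`Sol.sweep`).
* Characteristics through points where `Y_σ < 0` can be continued backward in time as long as they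
  stay bounded: `|Y_σ|` grows backward, which keeps `c` away from zero (`Sol.backward_char`). On
  the one of speed `-c` starting from a point as above, `R₁` drops by a fixed amount `η` within a
  very short time (`Sol.segment`), and so `Y₁` is very negative somewhere on it
  (`Sol.segment_slope`).
* Choose such a point `(A, Γ A)` and a much later, much more compressive one `(B, Γ B)`. Let `C` and
  `D` be the backward characteristics of speed `-c` from them, `t'` a time at which `Y₁` is very
  negative on `D`, and `Λ` the backward characteristic of speed `c` from `(t', D t')`. As `Y₁ < 0`
  on `Λ` and `Y₁ > 0` on `Γ`, these do not meet, so `Λ` has to meet `C` (`Sol.meet`). It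
  cannot do so on the short part of `C` just before the time `A`, because `Y₁` is even more negative
  backward on `Λ` than at `t'`, and the bound for `Y₁` near `(A, Γ A)` was fixed before `B`.
* So the quadrilateral bounded by `C`, `Γ`, `D`, `Λ` contains the point of `C` at which `R₁` has
  dropped by `η`. By the maximum principle for the elliptic phase (`Sol.max_principle`) `u ≤ 0` in
  the quadrilateral, so `R₁` is transported forward with speed `c` in it, and the
  value at that point is at least the minimum of `R₁` over the sides `Γ`, `D`, `Λ`
  (`Sol.quadrilateral`). That minimum exceeds the value of `R₁` on `Γ` minus `η`: a contradiction.
-/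

/-- `q(w) = ∫_w^0 √(-p'(s)) ds`. -/
noncomputable def qfun (p : ℝ → ℝ) (w : ℝ) : ℝ :=
  ∫ s in w..(0:ℝ), Real.sqrt (-(deriv p s))

/-- `(u, v)` solves the p-system `u_t = -v_x`, `v_t = (p(u))_x` on the domain `D`. -/
def PSystem (p : ℝ → ℝ) (u v : ℝ × ℝ → ℝ) (D : Set (ℝ × ℝ)) : Prop :=
  ∀ z ∈ D,
    deriv (fun s => u (s, z.2)) z.1 = -deriv (fun y => v (z.1, y)) z.2 ∧
    deriv (fun s => v (s, z.2)) z.1 = deriv (fun y => p (u (z.1, y))) z.2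


namespace PSys

open Set Filter Topology

/-- Partial derivative in the time variable. -/
noncomputable def dt (f : ℝ × ℝ → ℝ) (z : ℝ × ℝ) : ℝ := fderiv ℝ f z (1, 0)

/-- Partial derivative in the space variable. -/
noncomputable def dx (f : ℝ × ℝ → ℝ) (z : ℝ × ℝ) : ℝ := fderiv ℝ f z (0, 1)

/-- The sound speed `c(w) = √(-p'(w))`; it vanishes for `w ≥ 0`. -/
noncomputable def c (p : ℝ → ℝ) (w : ℝ) : ℝ := Real.sqrt (-(deriv p w))

/-- The coefficient `p'' / (4 c^{5/2})` of the Riccati equation satisfied by `Y` along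
characteristics. -/
noncomputable def acoef (p : ℝ → ℝ) (w : ℝ) : ℝ :=
  deriv (deriv p) w / (4 * c p w ^ 2 * Real.sqrt (c p w))

/-- The Riemann invariant `v - σ q(u)` transported with speed `σ c(u)`. -/
noncomputable def R (p : ℝ → ℝ) (u v : ℝ × ℝ → ℝ) (σ : ℝ) (z : ℝ × ℝ) : ℝ :=
  v z - σ * qfun p (u z)

/-- The space derivative `v_x + σ c(u) u_x` of the Riemann invariant `R σ`. -/
noncomputable def W (p : ℝ → ℝ) (u v : ℝ × ℝ → ℝ) (σ : ℝ) (z : ℝ × ℝ) : ℝ :=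
  dx v z + σ * c p (u z) * dx u z

/-- The weighted derivative `√c · ∂ₓR`, for which the transport equation becomes `Y' = a Y²`. -/
noncomputable def Y (p : ℝ → ℝ) (u v : ℝ × ℝ → ℝ) (σ : ℝ) (z : ℝ × ℝ) : ℝ :=
  Real.sqrt (c p (u z)) * W p u v σ z

/-- The standing assumptions, with the p-system written through Fréchet derivatives. -/
structure Sol (p : ℝ → ℝ) (u v : ℝ × ℝ → ℝ) : Prop where
  hp : ContDiff ℝ 2 p
  conv : ∀ w : ℝ, 0 < deriv (deriv p) w
  p0 : deriv p 0 = 0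
  hu : ContDiff ℝ 2 u
  hv : ContDiff ℝ 2 v
  eq1 : ∀ z, dt u z = -dx v z
  eq2 : ∀ z, dt v z = deriv p (u z) * dx u z

/-- `γ` is, over `[a, b]`, a characteristic of speed `σ c(u)` inside the hyperbolic region. -/
def IsChar (p : ℝ → ℝ) (u : ℝ × ℝ → ℝ) (σ : ℝ) (γ : ℝ → ℝ) (a b : ℝ) : Prop :=
  ∀ t ∈ Icc a b, u (t, γ t) < 0 ∧ HasDerivAt γ (σ * c p (u (t, γ t))) t

/-! ### Calculus helpers -/

lemma slope_lower {f f' : ℝ → ℝ} {a b k : ℝ} (hab : a ≤ b)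
    (hf : ∀ t ∈ Icc a b, HasDerivAt f (f' t) t) (hk : ∀ t ∈ Ioo a b, k ≤ f' t) :
    k * (b - a) ≤ f b - f a := by
  rcases hab.eq_or_lt with rfl | hlt
  · simp
  · obtain ⟨t, ht, he⟩ := exists_hasDerivAt_eq_slope f f' hlt
      (fun t ht => (hf t ht).continuousAt.continuousWithinAt)
      (fun t ht => hf t (Ioo_subset_Icc_self ht))
    have := hk t ht
    rw [he, le_div_iff₀ (sub_pos.2 hlt)] at this
    exact this

lemma second_deriv_nonpos {f g : ℝ → ℝ} {a k : ℝ} (hmax : IsLocalMax f a)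
    (hf : ∀ t, HasDerivAt f (g t) t) (hg : HasDerivAt g k a) : k ≤ 0 := by
  by_contra! hk
  have hfg : deriv f = g := funext fun t => (hf t).deriv
  have h0 : g a = 0 := by rw [← hfg]; exact hmax.deriv_eq_zero
  have hmin : IsLocalMin f a := isLocalMin_of_deriv_deriv_pos (by rw [hfg, hg.deriv]; exact hk)
    (by rw [hfg]; exact h0) (hf a).continuousAt
  have hc : f =ᶠ[𝓝 a] fun _ => f a := by
    filter_upwards [hmax, hmin] with t h1 h2 using le_antisymm h1 h2
  have h2 : g =ᶠ[𝓝 a] fun _ => 0 := by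
    have := hc.deriv
    rw [hfg] at this
    simpa using this
  have := h2.deriv_eq
  rw [hg.deriv] at this
  simp at this
  linarith

lemma hasDerivAt_along {f : ℝ × ℝ → ℝ} {γ : ℝ → ℝ} {t m : ℝ}
    (hf : DifferentiableAt ℝ f (t, γ t)) (hγ : HasDerivAt γ m t) :
    HasDerivAt (fun s => f (s, γ s)) (dt f (t, γ t) + m * dx f (t, γ t)) t := by
  have h := hf.hasFDerivAt.comp_hasDerivAt t ((hasDerivAt_id t).prodMk hγ)
  refine h.congr_deriv ?_
  have : ((1 : ℝ), m) = (1, 0) + m • (0, 1) := by ext <;> simp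
  rw [this, map_add, map_smul]
  rfl

lemma contDiff_dx {f : ℝ × ℝ → ℝ} (hf : ContDiff ℝ 2 f) : ContDiff ℝ 1 (dx f) :=
  (hf.fderiv_right (m := 1) (by norm_num)).clm_apply contDiff_const

lemma contDiff_dt {f : ℝ × ℝ → ℝ} (hf : ContDiff ℝ 2 f) : ContDiff ℝ 1 (dt f) :=
  (hf.fderiv_right (m := 1) (by norm_num)).clm_apply contDiff_const

lemma mixed {f : ℝ × ℝ → ℝ} (hf : ContDiff ℝ 2 f) (z : ℝ × ℝ) : dt (dx f) z = dx (dt f) z := by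
  have hs : IsSymmSndFDerivAt ℝ f z := hf.contDiffAt.isSymmSndFDerivAt (by simp)
  have hd : DifferentiableAt ℝ (fderiv ℝ f) z :=
    ((hf.fderiv_right (m := 1) (by norm_num)).differentiable (by norm_num)) z
  have e1 : dt (dx f) z = fderiv ℝ (fderiv ℝ f) z (1, 0) (0, 1) := by
    unfold dt dx
    rw [fderiv_clm_apply hd (differentiableAt_const _)]
    simp
  have e2 : dx (dt f) z = fderiv ℝ (fderiv ℝ f) z (0, 1) (1, 0) := by
    unfold dt dx
    rw [fderiv_clm_apply hd (differentiableAt_const _)]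
    simp
  rw [e1, e2]
  exact hs (1, 0) (0, 1)

lemma hasDerivAt_dx {f : ℝ × ℝ → ℝ} {t x : ℝ} (hf : DifferentiableAt ℝ f (t, x)) :
    HasDerivAt (fun y => f (t, y)) (dx f (t, x)) x :=
  hf.hasFDerivAt.comp_hasDerivAt x ((hasDerivAt_const x t).prodMk (hasDerivAt_id x))

lemma hasDerivAt_dt {f : ℝ × ℝ → ℝ} {t x : ℝ} (hf : DifferentiableAt ℝ f (t, x)) :
    HasDerivAt (fun s => f (s, x)) (dt f (t, x)) t :=
  hf.hasFDerivAt.comp_hasDerivAt t ((hasDerivAt_id t).prodMk (hasDerivAt_const t x))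

/-! ### The sound speed and the function `q` -/

section

variable {p : ℝ → ℝ} {u v : ℝ × ℝ → ℝ}

lemma Sol.hdp (h : Sol p u v) : ContDiff ℝ 1 (deriv p) := by
  have := h.hp
  rw [show (2 : WithTop ℕ∞) = 1 + 1 by norm_num, contDiff_succ_iff_deriv] at this
  exact this.2.2

lemma Sol.hasDerivAt_p (h : Sol p u v) (w : ℝ) : HasDerivAt p (deriv p w) w :=
  (h.hp.differentiable (by norm_num) w).hasDerivAt

lemma Sol.hasDerivAt_dp (h : Sol p u v) (w : ℝ) :
    HasDerivAt (deriv p) (deriv (deriv p) w) w :=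
  (h.hdp.differentiable (by norm_num) w).hasDerivAt

lemma Sol.dp_mono (h : Sol p u v) : StrictMono (deriv p) :=
  strictMono_of_deriv_pos h.conv

lemma Sol.dp_neg (h : Sol p u v) {w : ℝ} (hw : w < 0) : deriv p w < 0 := by
  rw [← h.p0]; exact h.dp_mono hw

lemma Sol.c_cont (h : Sol p u v) : Continuous (c p) :=
  Real.continuous_sqrt.comp h.hdp.continuous.neg

lemma c_nonneg (w : ℝ) : 0 ≤ c p w := Real.sqrt_nonneg _

lemma Sol.c_pos (h : Sol p u v) {w : ℝ} (hw : w < 0) : 0 < c p w :=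
  Real.sqrt_pos.2 (by have := h.dp_neg hw; linarith)

lemma Sol.neg_of_c_pos (h : Sol p u v) {w : ℝ} (hw : 0 < c p w) : w < 0 := by
  have := Real.sqrt_pos.1 hw
  by_contra! h0
  have := h.dp_mono.monotone h0
  rw [h.p0] at this
  linarith

lemma Sol.c_sq (h : Sol p u v) {w : ℝ} (hw : w ≤ 0) : c p w ^ 2 = -deriv p w := by
  have := h.dp_mono.monotone hw
  rw [h.p0] at this
  exact Real.sq_sqrt (by linarith)

lemma Sol.c_anti (h : Sol p u v) : Antitone (c p) := fun _ _ hab =>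
  Real.sqrt_le_sqrt (neg_le_neg (h.dp_mono.monotone hab))

lemma Sol.hasDerivAt_c (h : Sol p u v) {w : ℝ} (hw : w < 0) :
    HasDerivAt (c p) (-(deriv (deriv p) w) / (2 * c p w)) w :=
  (h.hasDerivAt_dp w).fun_neg.sqrt (by have := h.dp_neg hw; linarith)

lemma Sol.hasDerivAt_q (h : Sol p u v) (w : ℝ) : HasDerivAt (qfun p) (-(c p w)) w := by
  have := intervalIntegral.integral_hasDerivAt_left (f := c p) (a := w) (b := 0)
    (h.c_cont.intervalIntegrable _ _) (h.c_cont.stronglyMeasurableAtFilter _ _) h.c_cont.continuousAt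
  exact this

lemma Sol.q_anti (h : Sol p u v) : Antitone (qfun p) :=
  antitone_of_deriv_nonpos (fun w => (h.hasDerivAt_q w).differentiableAt)
    (fun w => by rw [(h.hasDerivAt_q w).deriv]; have := c_nonneg (p := p) w; linarith)

lemma Sol.q_lt (h : Sol p u v) {a b : ℝ} (hab : a < b) (hb : b ≤ 0) :
    qfun p b < qfun p a := by
  obtain ⟨w, hw, he⟩ := exists_hasDerivAt_eq_slope (qfun p) (fun w => -(c p w)) hab
    (fun t _ => (h.hasDerivAt_q t).continuousAt.continuousWithinAt) (fun t _ => h.hasDerivAt_q t)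
  have := h.c_pos (lt_of_lt_of_le hw.2 hb)
  rw [eq_div_iff (sub_pos.2 hab).ne'] at he
  nlinarith [mul_pos this (sub_pos.2 hab)]

lemma Sol.p_anti (h : Sol p u v) {a b : ℝ} (hab : a ≤ b) (hb : b ≤ 0) : p b ≤ p a := by
  have := slope_lower (f := fun w => -p w) (f' := fun w => -deriv p w) (k := 0) hab
    (fun t _ => (h.hasDerivAt_p t).neg)
    (fun t ht => by have := h.dp_neg (lt_of_lt_of_le ht.2 hb); linarith)
  linarith

lemma Sol.p_lt (h : Sol p u v) {a b : ℝ} (hab : a < b) (hb : b ≤ 0) : p b < p a := by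
  obtain ⟨w, hw, he⟩ := exists_hasDerivAt_eq_slope p (deriv p) hab
    (fun t _ => (h.hasDerivAt_p t).continuousAt.continuousWithinAt) (fun t _ => h.hasDerivAt_p t)
  have := h.dp_neg (lt_of_lt_of_le hw.2 hb)
  rw [eq_div_iff (sub_pos.2 hab).ne'] at he
  nlinarith [mul_pos (neg_pos.2 this) (sub_pos.2 hab)]

lemma Sol.acoef_pos (h : Sol p u v) {w : ℝ} (hw : w < 0) : 0 < acoef p w := by
  have h1 := h.c_pos hw
  have h2 := Real.sqrt_pos.2 h1
  have h3 := h.conv w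
  unfold acoef
  positivity

/-- The Riccati coefficient stays away from zero as long as `u` stays bounded; the blow-up of `a`
at the sonic value `u = 0` only helps. -/
lemma Sol.acoef_lower (h : Sol p u v) {L : ℝ} (hL : 0 < L) :
    ∃ a₀ > 0, ∀ w, -L ≤ w → w < 0 → a₀ ≤ acoef p w := by
  obtain ⟨w0, -, hw0⟩ := isCompact_Icc.exists_isMinOn (s := Icc (-L) 0)
    ⟨0, by simp [hL.le]⟩ (h.hdp.continuous_deriv (by norm_num)).continuousOn
  have hC := h.c_pos (w := -L) (by linarith)
  have hC2 := Real.sqrt_pos.2 hC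
  have h3 := h.conv w0
  refine ⟨deriv (deriv p) w0 / (4 * c p (-L) ^ 2 * Real.sqrt (c p (-L))), by positivity, ?_⟩
  intro w hw hw'
  have h1 := h.c_pos hw'
  have h2 := Real.sqrt_pos.2 h1
  have hle : c p w ≤ c p (-L) := h.c_anti hw
  have hs := Real.sqrt_le_sqrt hle
  have hm : deriv (deriv p) w0 ≤ deriv (deriv p) w := hw0 ⟨hw, hw'.le⟩
  unfold acoef
  have := h.conv w
  gcongr

/-! ### Transport equations along curves -/

lemma Sol.du (h : Sol p u v) (z : ℝ × ℝ) : DifferentiableAt ℝ u z :=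
  h.hu.differentiable (by norm_num) z

lemma Sol.dv (h : Sol p u v) (z : ℝ × ℝ) : DifferentiableAt ℝ v z :=
  h.hv.differentiable (by norm_num) z

lemma Sol.R_cont (h : Sol p u v) (σ : ℝ) : Continuous (R p u v σ) := by
  have hq : Continuous (qfun p) := continuous_iff_continuousAt.2
    fun w => (h.hasDerivAt_q w).continuousAt
  unfold R
  exact h.hv.continuous.sub (continuous_const.mul (hq.comp h.hu.continuous))

lemma Sol.W_cont (h : Sol p u v) (σ : ℝ) : Continuous (W p u v σ) := by
  unfold W
  exact (contDiff_dx h.hv).continuous.add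
    ((continuous_const.mul (h.c_cont.comp h.hu.continuous)).mul (contDiff_dx h.hu).continuous)

lemma Sol.Y_cont (h : Sol p u v) (σ : ℝ) : Continuous (Y p u v σ) := by
  unfold Y
  exact (Real.continuous_sqrt.comp (h.c_cont.comp h.hu.continuous)).mul (h.W_cont σ)

/-- Since `R_t = -σ c R_x` where `u ≤ 0`, the invariant changes along a curve of slope `m` at the
rate `(m - σ c) R_x`. -/
lemma Sol.R_along (h : Sol p u v) {σ : ℝ} (hσ : σ ^ 2 = 1) {γ : ℝ → ℝ} {t m : ℝ}
    (hu : u (t, γ t) ≤ 0) (hγ : HasDerivAt γ m t) :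
    HasDerivAt (fun s => R p u v σ (s, γ s))
      ((m - σ * c p (u (t, γ t))) * W p u v σ (t, γ t)) t := by
  have h1 := hasDerivAt_along (h.dv _) hγ
  have h2 := (h.hasDerivAt_q (u (t, γ t))).comp t (hasDerivAt_along (h.du _) hγ)
  have h3 := h1.sub (h2.const_mul σ)
  refine h3.congr_deriv ?_
  have hc := h.c_sq hu
  rw [h.eq1, h.eq2]
  unfold W
  have hd : deriv p (u (t, γ t)) = -c p (u (t, γ t)) ^ 2 := by linarith
  rw [hd]
  linear_combination (c p (u (t, γ t)) ^ 2 * dx u (t, γ t)) * hσ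

lemma Sol.dt_dx_v (h : Sol p u v) (z : ℝ × ℝ) :
    dt (dx v) z = deriv (deriv p) (u z) * dx u z ^ 2 + deriv p (u z) * dx (dx u) z := by
  obtain ⟨t, x⟩ := z
  rw [mixed h.hv, show dt v = fun z => deriv p (u z) * dx u z from funext h.eq2]
  have e1 := (h.hasDerivAt_dp (u (t, x))).comp x (hasDerivAt_dx (h.du (t, x)))
  have e2 := hasDerivAt_dx ((contDiff_dx h.hu).differentiable (by norm_num) (t, x))
  have e3 := e1.mul e2
  have hd : DifferentiableAt ℝ (fun z => deriv p (u z) * dx u z) (t, x) :=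
    ((h.hdp.differentiable (by norm_num) _).comp _ (h.du _)).mul
      ((contDiff_dx h.hu).differentiable (by norm_num) (t, x))
  rw [(hasDerivAt_dx hd).unique e3]
  simp only [Function.comp]
  ring

/-- The Riccati equation `Y' = a(u) Y²` along characteristics. -/
lemma Sol.Y_along (h : Sol p u v) {σ : ℝ} (hσ : σ ^ 2 = 1) {γ : ℝ → ℝ} {t : ℝ}
    (hu : u (t, γ t) < 0) (hγ : HasDerivAt γ (σ * c p (u (t, γ t))) t) :
    HasDerivAt (fun s => Y p u v σ (s, γ s))
      (acoef p (u (t, γ t)) * Y p u v σ (t, γ t) ^ 2) t := by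
  have hcp := h.c_pos hu
  have hc2 := h.c_sq hu.le
  have hU := hasDerivAt_along (h.du _) hγ
  have hC := (h.hasDerivAt_c hu).comp t hU
  have hvx := hasDerivAt_along ((contDiff_dx h.hv).differentiable (by norm_num) (t, γ t)) hγ
  have hux := hasDerivAt_along ((contDiff_dx h.hu).differentiable (by norm_num) (t, γ t)) hγ
  have hS := hC.sqrt hcp.ne'
  have hW := hvx.add ((hC.const_mul σ).mul hux)
  have hY := hS.mul hW
  refine hY.congr_deriv ?_
  have m1 : dt (dx u) (t, γ t) = -dx (dx v) (t, γ t) := by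
    rw [mixed h.hu, show dt u = fun z => -dx v z from funext h.eq1]
    unfold dx
    rw [fderiv_fun_neg]
    rfl
  have m2 := h.dt_dx_v (t, γ t)
  rw [m1, m2, h.eq1]
  have hd : deriv p (u (t, γ t)) = -c p (u (t, γ t)) ^ 2 := by linarith
  rw [hd]
  unfold Y W acoef
  simp only [Function.comp, Pi.add_apply, Pi.mul_apply]
  have hs := Real.sqrt_pos.2 hcp
  have hss := Real.sq_sqrt hcp.le
  set C := c p (u (t, γ t)) with hCdef
  set s := Real.sqrt C with hsdef
  clear_value s
  generalize dx u (t, γ t) = ux at *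
  generalize dx v (t, γ t) = vx at *
  clear_value C
  subst hss
  field_simp
  linear_combination (16 * (s ^ 8 * dx (dx u) (t, γ t)
    - s ^ 4 * deriv (deriv p) (u (t, γ t)) * ux ^ 2)) * hσ


/-! ### Characteristics -/

lemma IsChar.mono {σ : ℝ} {γ : ℝ → ℝ} {a b a' b' : ℝ} (hγ : IsChar p u σ γ a b)
    (ha : a ≤ a') (hb : b' ≤ b) : IsChar p u σ γ a' b' :=
  fun t ht => hγ t ⟨ha.trans ht.1, ht.2.trans hb⟩

lemma IsChar.cont {σ : ℝ} {γ : ℝ → ℝ} {a b : ℝ} (hγ : IsChar p u σ γ a b) :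
    ContinuousOn γ (Icc a b) :=
  fun t ht => (hγ t ht).2.continuousAt.continuousWithinAt

lemma IsChar.R_const (h : Sol p u v) {σ : ℝ} (hσ : σ ^ 2 = 1) {γ : ℝ → ℝ} {a b : ℝ}
    (hγ : IsChar p u σ γ a b) {s t : ℝ} (hs : a ≤ s) (hst : s ≤ t) (ht : t ≤ b) :
    R p u v σ (s, γ s) = R p u v σ (t, γ t) := by
  have hd : ∀ r ∈ Icc s t, HasDerivAt (fun s => R p u v σ (s, γ s)) 0 r := fun r hr => by
    have := hγ r ⟨hs.trans hr.1, hr.2.trans ht⟩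
    exact (h.R_along hσ this.1.le this.2).congr_deriv (by ring)
  have h1 := slope_lower (k := 0) hst hd (fun _ _ => le_rfl)
  have h2 := slope_lower (k := 0) hst (fun r hr => (hd r hr).fun_neg) (fun _ _ => by simp)
  linarith

lemma IsChar.Y_mono (h : Sol p u v) {σ : ℝ} (hσ : σ ^ 2 = 1) {γ : ℝ → ℝ} {a b : ℝ}
    (hγ : IsChar p u σ γ a b) {s t : ℝ} (hs : a ≤ s) (hst : s ≤ t) (ht : t ≤ b) :
    Y p u v σ (s, γ s) ≤ Y p u v σ (t, γ t) := by
  have h1 := slope_lower (k := 0) hst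
    (fun r hr => by
      have := hγ r ⟨hs.trans hr.1, hr.2.trans ht⟩
      exact h.Y_along hσ this.1 this.2)
    (fun r hr => by
      have := hγ r ⟨hs.trans hr.1.le, hr.2.le.trans ht⟩
      have := (h.acoef_pos this.1)
      positivity)
  linarith

lemma Sol.Yinv_along (h : Sol p u v) {σ : ℝ} (hσ : σ ^ 2 = 1) {γ : ℝ → ℝ} {t : ℝ}
    (hu : u (t, γ t) < 0) (hγ : HasDerivAt γ (σ * c p (u (t, γ t))) t)
    (hY : Y p u v σ (t, γ t) ≠ 0) :
    HasDerivAt (fun s => (Y p u v σ (s, γ s))⁻¹) (-acoef p (u (t, γ t))) t :=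
  ((h.Y_along hσ hu hγ).fun_inv hY).congr_deriv (by field_simp)

lemma Sol.Y_neg_iff (h : Sol p u v) {σ : ℝ} {z : ℝ × ℝ} (hu : u z < 0) :
    Y p u v σ z < 0 ↔ W p u v σ z < 0 := by
  have := Real.sqrt_pos.2 (h.c_pos hu)
  unfold Y
  constructor
  · intro hy; by_contra! hw; nlinarith [mul_nonneg this.le hw]
  · intro hw; exact mul_neg_of_pos_of_neg this hw

lemma Sol.Y_pos_iff (h : Sol p u v) {σ : ℝ} {z : ℝ × ℝ} (hu : u z < 0) :
    0 < Y p u v σ z ↔ 0 < W p u v σ z := by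
  have := Real.sqrt_pos.2 (h.c_pos hu)
  unfold Y
  exact mul_pos_iff_of_pos_left this

/-! ### The maximum principle in the elliptic region -/

/-- Where `u > 0` the equation `u_tt + p(u)_xx = 0` is elliptic, so a compact set on whose
boundary `u ≤ 0` contains no elliptic point. -/
lemma Sol.max_principle (h : Sol p u v) {K : Set (ℝ × ℝ)} (hK : IsCompact K)
    (hb : ∀ z ∈ K, u z ≤ 0 ∨ K ∈ 𝓝 z) : ∀ z ∈ K, u z ≤ 0 := by
  by_contra! hcon
  obtain ⟨z1, hz1, hpos⟩ := hcon
  obtain ⟨B, hB⟩ := (hK.image (continuous_fst.pow 2 : Continuous fun z : ℝ × ℝ => z.1 ^ 2)).bddAbove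
  have hB' : ∀ z ∈ K, z.1 ^ 2 ≤ B := fun z hz => hB ⟨z, hz, rfl⟩
  have hB0 : 0 ≤ B := (sq_nonneg _).trans (hB' z1 hz1)
  -- a quadratic perturbation in time makes the maximum principle strict
  set δ := u z1 / (2 * (B + 1)) with hδ
  have hδ0 : 0 < δ := by positivity
  obtain ⟨z0, hz0, hmax⟩ := hK.exists_isMaxOn ⟨z1, hz1⟩
    (f := fun z => u z + δ * z.1 ^ 2) (by
      exact (h.hu.continuous.add (continuous_const.mul (continuous_fst.pow 2))).continuousOn)
  have hu0 : 0 < u z0 := by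
    have h1 : u z1 + δ * z1.1 ^ 2 ≤ u z0 + δ * z0.1 ^ 2 := hmax hz1
    have h2 : δ * z0.1 ^ 2 ≤ δ * B := mul_le_mul_of_nonneg_left (hB' z0 hz0) hδ0.le
    have h3 : δ * (2 * (B + 1)) = u z1 := by rw [hδ]; field_simp
    have h4 : 0 ≤ δ * z1.1 ^ 2 := by positivity
    nlinarith
  have hnhds : K ∈ 𝓝 z0 := (hb z0 hz0).resolve_left (not_le.2 hu0)
  have hloc : IsLocalMax (fun z => u z + δ * z.1 ^ 2) z0 := hmax.isLocalMax hnhds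
  obtain ⟨t, x⟩ := z0
  have hdux := (contDiff_dx h.hu).differentiable (by norm_num)
  have hdut := (contDiff_dt h.hu).differentiable (by norm_num)
  -- in the time direction
  have ht : dt (dt u) (t, x) + 2 * δ ≤ 0 := by
    refine second_deriv_nonpos (f := fun s => u (s, x) + δ * s ^ 2)
      (g := fun s => dt u (s, x) + δ * (2 * s)) (a := t) ?_ ?_ ?_
    · exact hloc.comp_continuous (g := fun s => (s, x)) (by fun_prop)
    · intro s
      exact ((hasDerivAt_dt (h.du (s, x))).add ((hasDerivAt_pow 2 s).const_mul δ)).congr_deriv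
        (by norm_num)
    · exact ((hasDerivAt_dt (hdut (t, x))).add
        (((hasDerivAt_id t).const_mul 2).const_mul δ)).congr_deriv (by ring)
  -- in the space direction
  have hlx : IsLocalMax (fun y => u (t, y) + δ * t ^ 2) x :=
    hloc.comp_continuous (g := fun y => (t, y)) (by fun_prop)
  have hx : dx (dx u) (t, x) ≤ 0 := by
    refine second_deriv_nonpos (f := fun y => u (t, y) + δ * t ^ 2)
      (g := fun y => dx u (t, y)) (a := x) hlx ?_ ?_
    · intro y
      exact (hasDerivAt_dx (h.du (t, y))).add_const _
    · exact hasDerivAt_dx (hdux (t, x))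
  have hx0 : dx u (t, x) = 0 :=
    hlx.hasDerivAt_eq_zero ((hasDerivAt_dx (h.du (t, x))).add_const _)
  have e1 : dt (dt u) (t, x) = -dt (dx v) (t, x) := by
    rw [show dt u = fun z => -dx v z from funext h.eq1]
    unfold dt
    rw [fderiv_fun_neg]
    rfl
  have e2 := h.dt_dx_v (t, x)
  have hp' : 0 < deriv p (u (t, x)) := by rw [← h.p0]; exact h.dp_mono hu0
  rw [e1, e2, hx0] at ht
  nlinarith [mul_nonpos_of_nonneg_of_nonpos hp'.le hx]

/-! ### Backward characteristics in compressive data -/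

/-- The field `√(-p'(u))`, with `-p'(u)` clamped to `[d, N]`, is bounded and locally Lipschitz, so
its integral curves exist on every bounded time interval. -/
lemma Sol.clamped_flow (h : Sol p u v) {σ : ℝ} (hσ : σ ^ 2 = 1) {d N : ℝ} (hd : 0 < d)
    (ts xs : ℝ) {T : ℝ} (hT : T < ts) :
    ∃ γ : ℝ → ℝ, γ ts = xs ∧ ∀ t ∈ Icc T ts,
      HasDerivAt γ (σ * Real.sqrt (max d (min (-(deriv p (u (t, γ t)))) N))) t := by
  set N' := max d N with hN'
  have hN'0 : 0 < N' := lt_of_lt_of_le hd (le_max_left _ _)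
  have habs : |σ| = 1 := by
    rw [← sq_abs] at hσ
    exact (pow_eq_one_iff_of_nonneg (abs_nonneg σ) two_ne_zero).1 hσ
  set F : ℝ → ℝ → ℝ := fun t x => σ * Real.sqrt (max d (min (-(deriv p (u (t, x)))) N)) with hF
  have hFc : Continuous fun z : ℝ × ℝ => F z.1 z.2 := by
    have h1 : Continuous fun z : ℝ × ℝ => -(deriv p (u z)) :=
      (h.hdp.continuous.comp h.hu.continuous).neg
    exact continuous_const.mul (Real.continuous_sqrt.comp
      (continuous_const.max (h1.min continuous_const)))
  obtain ⟨L, hL⟩ : ∃ L : NNReal, (L : ℝ) = Real.sqrt N' := ⟨⟨_, Real.sqrt_nonneg _⟩, rfl⟩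
  obtain ⟨a, ha⟩ : ∃ a : NNReal, (a : ℝ) = Real.sqrt N' * (ts - T + 2) :=
    ⟨⟨_, mul_nonneg (Real.sqrt_nonneg _) (by linarith)⟩, rfl⟩
  have hG : ContDiff ℝ 1 fun z : ℝ × ℝ => deriv p (u z) := h.hdp.comp (h.hu.of_le (by norm_num))
  -- a Lipschitz constant in `x` for `p'(u)` on the relevant box
  obtain ⟨B, hB0, hB⟩ : ∃ B : ℝ, 0 ≤ B ∧ ∀ t ∈ Icc (T - 1) (ts + 1), ∀ x ∈ Metric.closedBall xs a,
      |dx (fun z : ℝ × ℝ => deriv p (u z)) (t, x)| ≤ B := by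
    have hc : Continuous (dx fun z : ℝ × ℝ => deriv p (u z)) :=
      (hG.continuous_fderiv (by norm_num)).clm_apply continuous_const
    obtain ⟨B, hB⟩ := ((isCompact_Icc (a := T - 1) (b := ts + 1)).prod
      (isCompact_closedBall xs (a : ℝ))).exists_bound_of_continuousOn hc.continuousOn
    exact ⟨|B|, abs_nonneg _, fun t ht x hx => (hB (t, x) ⟨ht, hx⟩).trans (le_abs_self _)⟩
  have hlip : ∀ t ∈ Icc (T - 1) (ts + 1), ∀ x ∈ Metric.closedBall xs (a : ℝ),
      ∀ y ∈ Metric.closedBall xs (a : ℝ),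
      |deriv p (u (t, x)) - deriv p (u (t, y))| ≤ B * |x - y| := by
    intro t ht x hx y hy
    have := (convex_closedBall xs (a : ℝ)).norm_image_sub_le_of_norm_hasDerivWithin_le
      (f := fun y => deriv p (u (t, y))) (C := B)
      (fun x _ => (hasDerivAt_dx (hG.differentiable (by norm_num) (t, x))).hasDerivWithinAt)
      (fun x hx => hB t ht x hx) hy hx
    simpa [Real.norm_eq_abs] using this
  have hsq : ∀ m n : ℝ, |Real.sqrt (max d m) - Real.sqrt (max d n)| ≤
      |m - n| / Real.sqrt d := by
    intro m n
    have h1 : d ≤ max d m := le_max_left _ _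
    have h2 : d ≤ max d n := le_max_left _ _
    have hs1 := Real.sqrt_le_sqrt h1
    have hs2 := Real.sqrt_le_sqrt h2
    have hsd := Real.sqrt_pos.2 hd
    rw [le_div_iff₀ hsd]
    have e : (Real.sqrt (max d m) - Real.sqrt (max d n)) *
        (Real.sqrt (max d m) + Real.sqrt (max d n)) = max d m - max d n := by
      nlinarith [Real.sq_sqrt (hd.le.trans h1), Real.sq_sqrt (hd.le.trans h2)]
    calc |Real.sqrt (max d m) - Real.sqrt (max d n)| * Real.sqrt d
        ≤ |Real.sqrt (max d m) - Real.sqrt (max d n)| *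
          |Real.sqrt (max d m) + Real.sqrt (max d n)| := by
          gcongr
          rw [abs_of_nonneg (by positivity)]
          linarith
      _ = |max d m - max d n| := by rw [← abs_mul, e]
      _ ≤ |m - n| := by
          rw [max_comm d m, max_comm d n]; exact abs_max_sub_max_le_abs _ _ _
  obtain ⟨Lx, hLx⟩ : ∃ Lx : NNReal, (Lx : ℝ) = B / Real.sqrt d := ⟨⟨_, by positivity⟩, rfl⟩
  have hPL : IsPicardLindelof F (tmin := T - 1) (tmax := ts + 1)
      ⟨ts, by constructor <;> linarith⟩ xs a 0 L Lx := by
    refine ⟨?_, ?_, ?_, ?_⟩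
    · intro t ht
      refine LipschitzOnWith.of_dist_le_mul fun x hx y hy => ?_
      simp only [Real.dist_eq, hF, hLx]
      rw [← mul_sub, abs_mul, habs, one_mul]
      refine (hsq _ _).trans ?_
      rw [div_mul_eq_mul_div]
      gcongr
      refine (abs_min_sub_min_le_max _ _ _ _).trans ?_
      simp only [sub_self, abs_zero]
      rw [max_eq_left (abs_nonneg _), neg_sub_neg, abs_sub_comm]
      exact hlip t ht x hx y hy
    · intro x _
      exact (hFc.comp (continuous_id.prodMk continuous_const)).continuousOn
    · intro t _ x _
      simp only [hF, Real.norm_eq_abs, abs_mul, habs, one_mul]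
      rw [abs_of_nonneg (Real.sqrt_nonneg _), hL]
      exact Real.sqrt_le_sqrt (max_le_max le_rfl (min_le_right _ _))
    · simp only [ha, hL, NNReal.coe_zero, sub_zero]
      gcongr
      exact max_le (by linarith) (by linarith)
  obtain ⟨γ, h0, hγ⟩ := hPL.exists_eq_forall_mem_Icc_hasDerivWithinAt₀
  refine ⟨γ, h0, fun t ht => ?_⟩
  exact (hγ t ⟨by linarith [ht.1], by linarith [ht.2]⟩).hasDerivAt
    (Icc_mem_nhds (by linarith [ht.1]) (by linarith [ht.2]))

/-- A characteristic through a point where `∂ₓR < 0` can be followed backward in time until it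
leaves a prescribed box: by the Riccati equation `|Y|` grows backward in time, which keeps `c` away
from zero on the box, so the curve cannot reach the sonic set. -/
lemma Sol.backward_char (h : Sol p u v) {σ : ℝ} (hσ : σ ^ 2 = 1) {ts xs T X : ℝ}
    (hu : u (ts, xs) < 0) (hW : W p u v σ (ts, xs) < 0) (hT : T < ts) (hX : |xs| < X) :
    ∃ γ : ℝ → ℝ, ∃ T', T ≤ T' ∧ T' < ts ∧ γ ts = xs ∧ IsChar p u σ γ T' ts ∧
      (T' = T ∨ |γ T'| = X) := by
  have hbox : IsCompact (Icc T ts ×ˢ Icc (-X) X) := isCompact_Icc.prod isCompact_Icc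
  obtain ⟨S, hS⟩ := hbox.exists_bound_of_continuousOn (h.W_cont σ).continuousOn
  obtain ⟨N, hN⟩ := hbox.exists_bound_of_continuousOn
    (f := fun z => deriv p (u z)) (h.hdp.continuous.comp h.hu.continuous).continuousOn
  have hmem0 : ((ts, xs) : ℝ × ℝ) ∈ Icc T ts ×ˢ Icc (-X) X :=
    ⟨⟨hT.le, le_rfl⟩, (abs_lt.1 hX).1.le, (abs_lt.1 hX).2.le⟩
  have hS0 : 0 < S := lt_of_lt_of_le (norm_pos_iff.2 hW.ne) (hS _ hmem0)
  have hY0 := (h.Y_neg_iff hu).2 hW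
  set Y0 := Y p u v σ (ts, xs) with hY0d
  set δ := (Y0 / S) ^ 2 with hδ
  have hδ0 : 0 < δ := by have := hY0.ne; positivity
  have key : ∀ z ∈ Icc T ts ×ˢ Icc (-X) X, Y p u v σ z ≤ Y0 → δ ≤ c p (u z) := by
    intro z hz hYz
    have h1 : |W p u v σ z| ≤ S := hS z hz
    have h2 := Real.sqrt_nonneg (c p (u z))
    have h3 : -(Real.sqrt (c p (u z)) * S) ≤ Y p u v σ z := by
      unfold Y
      nlinarith [(abs_le.1 h1).1]
    have h4 : -Y0 / S ≤ Real.sqrt (c p (u z)) := by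
      rw [div_le_iff₀ hS0]; linarith
    have h5 : 0 ≤ -Y0 / S := by apply div_nonneg <;> linarith
    have h6 := pow_le_pow_left₀ h5 h4 2
    rw [Real.sq_sqrt (c_nonneg _)] at h6
    calc δ = (-Y0 / S) ^ 2 := by rw [hδ]; ring
      _ ≤ _ := h6
  obtain ⟨γ, h0, hγ⟩ := h.clamped_flow hσ (d := (δ / 2) ^ 2) (N := N) (by positivity) ts xs hT
  have hγc : ContinuousOn γ (Icc T ts) := fun t ht => (hγ t ht).continuousAt.continuousWithinAt
  have hcc : ContinuousOn (fun t => c p (u (t, γ t))) (Icc T ts) :=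
    (h.c_cont.comp h.hu.continuous).comp_continuousOn (continuousOn_id.prodMk hγc)
  -- where the clamp is inactive, `γ` is a characteristic
  have hchar : ∀ t ∈ Icc T ts, |γ t| ≤ X → 3 / 4 * δ ≤ c p (u (t, γ t)) →
      u (t, γ t) < 0 ∧ HasDerivAt γ (σ * c p (u (t, γ t))) t := by
    intro t ht hx hc
    have hneg : u (t, γ t) < 0 := h.neg_of_c_pos (by linarith)
    refine ⟨hneg, ?_⟩
    have h1 := hγ t ht
    have h2 := h.c_sq hneg.le
    have h3 : -(deriv p (u (t, γ t))) ≤ N :=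
      (neg_le_abs _).trans (hN (t, γ t) ⟨ht, abs_le.1 hx⟩)
    rw [min_eq_left h3, max_eq_right (by rw [← h2]; gcongr; linarith)] at h1
    exact h1
  set Bad : Set ℝ := Icc T ts ∩ {t | X ≤ |γ t|} ∪ Icc T ts ∩ {t | c p (u (t, γ t)) ≤ 3 / 4 * δ}
    with hBad
  have hBc : IsCompact Bad := by
    have c1 : IsClosed (Icc T ts ∩ {t | X ≤ |γ t|}) :=
      hγc.abs.preimage_isClosed_of_isClosed isClosed_Icc isClosed_Ici
    have c2 : IsClosed (Icc T ts ∩ {t | c p (u (t, γ t)) ≤ 3 / 4 * δ}) :=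
      hcc.preimage_isClosed_of_isClosed isClosed_Icc isClosed_Iic
    exact isCompact_Icc.of_isClosed_subset (c1.union c2)
      (union_subset inter_subset_left inter_subset_left)
  have hgood : ∀ t ∈ Icc T ts, t ∉ Bad → |γ t| < X ∧ 3 / 4 * δ < c p (u (t, γ t)) := by
    intro t ht hb
    constructor
    · by_contra! hh; exact hb (Or.inl ⟨ht, hh⟩)
    · by_contra! hh; exact hb (Or.inr ⟨ht, hh⟩)
  have hts : ts ∉ Bad := by
    rintro (⟨-, hb⟩ | ⟨-, hb⟩)
    · simp only [mem_ofPred_eq, h0] at hb; linarith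
    · have := key _ hmem0 le_rfl
      simp only [mem_ofPred_eq, h0] at hb
      linarith
  rcases Bad.eq_empty_or_nonempty with he | hne
  · refine ⟨γ, T, le_rfl, hT, h0, fun t ht => ?_, Or.inl rfl⟩
    have := hgood t ht (by rw [he]; exact notMem_empty t)
    exact hchar t ht this.1.le this.2.le
  · obtain ⟨T', hT'B, hT'max⟩ := hBc.exists_isGreatest hne
    have hT'I : T' ∈ Icc T ts := by rcases hT'B with hh | hh <;> exact hh.1
    have hT'lt : T' < ts := lt_of_le_of_ne hT'I.2 (fun e => hts (e ▸ hT'B))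
    have hgood' : ∀ t ∈ Ioc T' ts, |γ t| < X ∧ 3 / 4 * δ < c p (u (t, γ t)) := fun t ht =>
      hgood t ⟨hT'I.1.trans ht.1.le, ht.2⟩ (fun hb => not_le.2 ht.1 (hT'max hb))
    have hsub : Icc T' ts ⊆ Icc T ts := Icc_subset_Icc_left hT'I.1
    have hcl : closure (Ioo T' ts) = Icc T' ts := closure_Ioo hT'lt.ne
    have hx' : |γ T'| ≤ X := by
      have := le_on_closure (f := fun t => |γ t|) (g := fun _ => X) (s := Ioo T' ts)
        (fun t ht => (hgood' t ⟨ht.1, ht.2.le⟩).1.le) (by rw [hcl]; exact (hγc.mono hsub).abs)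
        continuousOn_const
      exact this (by rw [hcl]; exact ⟨le_rfl, hT'lt.le⟩)
    have hc' : 3 / 4 * δ ≤ c p (u (T', γ T')) := by
      have := le_on_closure (f := fun _ => 3 / 4 * δ) (g := fun t => c p (u (t, γ t)))
        (s := Ioo T' ts) (fun t ht => (hgood' t ⟨ht.1, ht.2.le⟩).2.le) continuousOn_const
        (by rw [hcl]; exact hcc.mono hsub)
      exact this (by rw [hcl]; exact ⟨le_rfl, hT'lt.le⟩)
    have hC : IsChar p u σ γ T' ts := by
      intro t ht
      rcases ht.1.eq_or_lt with rfl | hlt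
      · exact hchar _ hT'I hx' hc'
      · have := hgood' t ⟨hlt, ht.2⟩
        exact hchar t (hsub ht) this.1.le this.2.le
    refine ⟨γ, T', hT'I.1, hT'lt, h0, hC, Or.inr ?_⟩
    rcases hT'B with ⟨-, hb⟩ | ⟨-, hb⟩
    · exact le_antisymm hx' hb
    · have h1 := hC.Y_mono h hσ le_rfl hT'lt.le le_rfl
      rw [h0] at h1
      have := key (T', γ T') ⟨hT'I, abs_le.1 hx'⟩ h1
      simp only [mem_ofPred_eq] at hb
      linarith

/-! ### Strong compression of the opposite family along an expansive characteristic -/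

/-- Along a characteristic `Γ` with `Y₁ > 0` the function `1 / Y₁` is positive and decreasing, so
the time during which `u` stays bounded is finite. If nevertheless `u > -M` recurs, then `u` has to
sweep from `-2M` to `-M` arbitrarily fast, and since `d/dt p(u) = c² W₋₁` along `Γ`, this forces
`Y₋₁` to be arbitrarily negative at some point with `u ≥ -2M`. -/
lemma Sol.sweep (h : Sol p u v) {Γ : ℝ → ℝ} {t1 : ℝ} (hΓ : ∀ b, IsChar p u 1 Γ t1 b)
    (hY : 0 < Y p u v 1 (t1, Γ t1)) {M : ℝ} (hM : 0 < M)
    (hf : ∃ᶠ t in atTop, -M < u (t, Γ t)) (κ T : ℝ) :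
    ∃ t, T ≤ t ∧ t1 ≤ t ∧ -(2 * M) ≤ u (t, Γ t) ∧ Y p u v (-1) (t, Γ t) ≤ -κ := by
  have hσ : (1 : ℝ) ^ 2 = 1 := by norm_num
  have hch : ∀ t, t1 ≤ t → u (t, Γ t) < 0 ∧ HasDerivAt Γ (1 * c p (u (t, Γ t))) t :=
    fun t ht => hΓ t t ⟨ht, le_rfl⟩
  have hpos : ∀ t, t1 ≤ t → 0 < Y p u v 1 (t, Γ t) := fun t ht =>
    hY.trans_le ((hΓ t).Y_mono h hσ le_rfl ht le_rfl)
  set H : ℝ → ℝ := fun t => (Y p u v 1 (t, Γ t))⁻¹ with hH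
  have hHpos : ∀ t, t1 ≤ t → 0 < H t := fun t ht => inv_pos.2 (hpos t ht)
  have hHd : ∀ t, t1 ≤ t → HasDerivAt (fun t => -H t) (acoef p (u (t, Γ t))) t := fun t ht =>
    (h.Yinv_along hσ (hch t ht).1 (hch t ht).2 (hpos t ht).ne').fun_neg.congr_deriv (by ring)
  have hanti : ∀ s t, t1 ≤ s → s ≤ t → H t ≤ H s := by
    intro s t hs hst
    have := slope_lower (k := 0) hst (fun r hr => hHd r (hs.trans hr.1))
      (fun r hr => (h.acoef_pos (hch r (hs.trans hr.1.le)).1).le)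
    linarith
  obtain ⟨a0, ha0, ha⟩ := h.acoef_lower (L := 2 * M) (by linarith)
  have hslope : ∀ s t, t1 ≤ s → s ≤ t → (∀ r ∈ Ioo s t, -(2 * M) ≤ u (r, Γ r)) →
      a0 * (t - s) ≤ H s - H t := by
    intro s t hs hst hr
    have := slope_lower (k := a0) hst (fun r hr => hHd r (hs.trans hr.1))
      (fun r hr' => ha _ (hr r hr') (hch r (hs.trans hr'.1.le)).1)
    linarith
  have hD : 0 < p (-(2 * M)) - p (-M) := by
    have := h.p_lt (a := -(2 * M)) (b := -M) (by linarith) (by linarith)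
    linarith
  have hC := h.c_pos (w := -(2 * M)) (by linarith)
  set D := p (-(2 * M)) - p (-M) with hDdef
  set E := c p (-(2 * M)) * Real.sqrt (c p (-(2 * M))) with hE
  have hE0 : 0 < E := mul_pos hC (Real.sqrt_pos.2 hC)
  obtain ⟨ℓ, hℓ0, hℓ1, hℓ2⟩ : ∃ ℓ > 0, ℓ ≤ 1 ∧ ℓ * (E * (|κ| + 1)) ≤ D := by
    have hk : 0 < E * (|κ| + 1) := by positivity
    refine ⟨min 1 (D / (E * (|κ| + 1))), by positivity, min_le_left _ _, ?_⟩
    rw [← le_div_iff₀ hk]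
    exact min_le_right _ _
  -- beyond `T2` the function `H` loses less than `a0 * ℓ`
  obtain ⟨T2, hT2, hT2H⟩ : ∃ T2, max T t1 ≤ T2 ∧ ∀ t, T2 ≤ t → H T2 - H t < a0 * ℓ := by
    have hne : (H '' Ici (max T t1)).Nonempty := ⟨_, _, self_mem_Ici, rfl⟩
    have hbd : BddBelow (H '' Ici (max T t1)) := ⟨0, by
      rintro _ ⟨t, ht, rfl⟩
      exact (hHpos t ((le_max_right _ _).trans ht)).le⟩
    obtain ⟨_, ⟨T2, hT2, rfl⟩, hlt⟩ := Real.lt_sInf_add_pos hne (mul_pos ha0 hℓ0)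
    refine ⟨T2, hT2, fun t ht => ?_⟩
    have := csInf_le hbd ⟨t, le_trans hT2 ht, rfl⟩
    linarith
  have hT2t : t1 ≤ T2 := (le_max_right _ _).trans hT2
  obtain ⟨τ', hτ', huτ'⟩ := frequently_atTop.1 hf (T2 + 1)
  have hΓc : ContinuousOn (fun t => u (t, Γ t)) (Icc T2 τ') :=
    h.hu.continuous.comp_continuousOn
      (continuousOn_id.prodMk ((hΓ τ').mono hT2t le_rfl).cont)
  have hZc : IsCompact (Icc T2 τ' ∩ {t | u (t, Γ t) ≤ -(2 * M)}) :=
    isCompact_Icc.of_isClosed_subset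
      (hΓc.preimage_isClosed_of_isClosed isClosed_Icc isClosed_Iic) inter_subset_left
  have hZne : (Icc T2 τ' ∩ {t | u (t, Γ t) ≤ -(2 * M)}).Nonempty := by
    by_contra hcon
    rw [not_nonempty_iff_eq_empty] at hcon
    have h1 := hslope T2 τ' hT2t (by linarith) (fun r hr => by
      by_contra! hlt
      have : r ∈ Icc T2 τ' ∩ {t | u (t, Γ t) ≤ -(2 * M)} := ⟨Ioo_subset_Icc_self hr, hlt.le⟩
      rw [hcon] at this
      exact this)
    have h2 := hT2H τ' (by linarith)
    nlinarith
  obtain ⟨τ, ⟨hτI, hτu⟩, hτmax⟩ := hZc.exists_isGreatest hZne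
  rw [mem_ofPred_eq] at hτu
  have hlt : τ < τ' := lt_of_le_of_ne hτI.2 (by rintro rfl; linarith)
  have hbig : ∀ r ∈ Ioc τ τ', -(2 * M) < u (r, Γ r) := by
    intro r hr
    by_contra! hh
    exact not_le.2 hr.1 (hτmax ⟨⟨hτI.1.trans hr.1.le, hr.2⟩, hh⟩)
  have hτt : t1 ≤ τ := hT2t.trans hτI.1
  have hshort : τ' - τ < ℓ := by
    have h1 := hslope τ τ' hτt hlt.le (fun r hr => (hbig r ⟨hr.1, hr.2.le⟩).le)
    have h2 := hT2H τ' (by linarith)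
    have h3 := hanti T2 τ hT2t hτI.1
    have h4 : a0 * (τ' - τ) < a0 * ℓ := by linarith
    exact lt_of_mul_lt_mul_left h4 ha0.le
  have hpd : ∀ t, t1 ≤ t → HasDerivAt (fun t => p (u (t, Γ t)))
      (c p (u (t, Γ t)) ^ 2 * W p u v (-1) (t, Γ t)) t := by
    intro t ht
    refine ((h.hasDerivAt_p _).comp t (hasDerivAt_along (h.du _) (hch t ht).2)).congr_deriv ?_
    have := h.c_sq (hch t ht).1.le
    rw [h.eq1, show deriv p (u (t, Γ t)) = -c p (u (t, Γ t)) ^ 2 by linarith]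
    unfold W
    ring
  obtain ⟨t, ht, hslp⟩ := exists_hasDerivAt_eq_slope _ _ hlt
    (fun t ht => (hpd t (hτt.trans ht.1)).continuousAt.continuousWithinAt)
    (fun t ht => hpd t (hτt.trans ht.1.le))
  have htt : t1 ≤ t := hτt.trans ht.1.le
  have hu2 := (hbig t ⟨ht.1, ht.2.le⟩).le
  refine ⟨t, ((le_max_left _ _).trans hT2).trans (hτI.1.trans ht.1.le), htt, hu2, ?_⟩
  rw [eq_div_iff (sub_pos.2 hlt).ne'] at hslp
  have hp1 := h.p_anti hτu (by linarith)
  have hp2 := h.p_anti huτ'.le (hch τ' (hτt.trans hlt.le)).1.le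
  have hct := c_nonneg (p := p) (u (t, Γ t))
  have hcE : c p (u (t, Γ t)) * Real.sqrt (c p (u (t, Γ t))) ≤ E := by
    have := h.c_anti hu2
    have := Real.sqrt_le_sqrt this
    rw [hE]
    gcongr
  have hYW : c p (u (t, Γ t)) ^ 2 * W p u v (-1) (t, Γ t) =
      c p (u (t, Γ t)) * Real.sqrt (c p (u (t, Γ t))) * Y p u v (-1) (t, Γ t) := by
    unfold Y
    linear_combination (-(c p (u (t, Γ t)) * W p u v (-1) (t, Γ t))) * Real.sq_sqrt hct
  rw [hYW] at hslp
  set e := c p (u (t, Γ t)) * Real.sqrt (c p (u (t, Γ t))) with he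
  have he0 : 0 ≤ e := mul_nonneg hct (Real.sqrt_nonneg _)
  set y := Y p u v (-1) (t, Γ t)
  have hle : e * y * (τ' - τ) ≤ -D := by linarith
  by_contra! hy
  have hy' : -(|κ| + 1) < y := by have := le_abs_self κ; linarith
  have h1 : e * (τ' - τ) ≤ E * ℓ :=
    mul_le_mul hcE hshort.le (sub_pos.2 hlt).le hE0.le
  have h2 : 0 ≤ e * (τ' - τ) := mul_nonneg he0 (sub_pos.2 hlt).le
  have hk : 0 < |κ| + 1 := by positivity
  have h3 : e * (τ' - τ) ≠ 0 := by
    intro h0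
    have : e * y * (τ' - τ) = 0 := by linear_combination y * h0
    linarith
  have h4 : 0 < e * (τ' - τ) := lt_of_le_of_ne h2 h3.symm
  nlinarith [mul_lt_mul_of_pos_left hy' h4, mul_le_mul_of_nonneg_right h1 hk.le]

/-! ### Short segments of backward characteristics -/

/-- Follow backward a characteristic `C` of negative speed on which `Y₋₁` is very negative. The
Riccati equation allows `u ≥ -3M` only for a short time, so within the time `1 / (a₃ κ)` the other
invariant `R₁ = R₋₁ - 2 q(u)` drops by `η = 2 (q(-3M) - q(-2M))`; `P` is the last time at which it
has done so. -/
lemma Sol.segment (h : Sol p u v) {M a3 κ : ℝ} (hM : 0 < M)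
    (ha : ∀ w, -(3 * M) ≤ w → w < 0 → a3 ≤ acoef p w) (hκ : 0 < κ) (hκ1 : 1 < a3 * κ)
    {C : ℝ → ℝ} {T ts : ℝ} (hT : T < ts) (hC : IsChar p u (-1) C T ts)
    (hus : -(2 * M) ≤ u (ts, C ts)) (hYs : Y p u v (-1) (ts, C ts) ≤ -κ)
    (hexit : T ≤ ts - 1 ∨ |C ts| + c p (-(3 * M)) + 1 ≤ |C T|) :
    ∃ P, T ≤ P ∧ P < ts ∧ a3 * κ * (ts - P) ≤ 1 ∧
      R p u v 1 (P, C P) ≤ R p u v 1 (ts, C ts) - 2 * (qfun p (-(3 * M)) - qfun p (-(2 * M))) ∧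
      ∀ t ∈ Ioc P ts,
        R p u v 1 (ts, C ts) - 2 * (qfun p (-(3 * M)) - qfun p (-(2 * M))) < R p u v 1 (t, C t) ∧
        -(3 * M) < u (t, C t) := by
  have hσ : (-1 : ℝ) ^ 2 = 1 := by norm_num
  set η := 2 * (qfun p (-(3 * M)) - qfun p (-(2 * M))) with hη
  set Rs := R p u v 1 (ts, C ts) with hRs
  have hη0 : 0 < η := by
    have := h.q_lt (a := -(3 * M)) (b := -(2 * M)) (by linarith) (by linarith)
    linarith
  have hRq : ∀ t ∈ Icc T ts, R p u v 1 (t, C t) =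
      Rs + 2 * qfun p (u (ts, C ts)) - 2 * qfun p (u (t, C t)) := by
    intro t ht
    have := hC.R_const h hσ ht.1 ht.2 le_rfl
    rw [hRs]
    unfold R at this ⊢
    linarith
  have hu3 : ∀ t ∈ Icc T ts, Rs - η < R p u v 1 (t, C t) → -(3 * M) < u (t, C t) := by
    intro t ht hR
    rw [hRq t ht] at hR
    by_contra! hle
    have h1 := h.q_anti hle
    have h2 := h.q_anti hus
    linarith
  have hYneg : ∀ t ∈ Icc T ts, Y p u v (-1) (t, C t) ≤ -κ := fun t ht =>
    (hC.Y_mono h hσ ht.1 ht.2 le_rfl).trans hYs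
  have hYinv : ∀ s, T ≤ s → s ≤ ts → (∀ r ∈ Ioo s ts, -(3 * M) < u (r, C r)) →
      a3 * κ * (ts - s) ≤ 1 := by
    intro s hs hst hr
    have h1 := slope_lower (f := fun t => -(Y p u v (-1) (t, C t))⁻¹) (k := a3) hst
      (fun r hr => by
        have hr' : r ∈ Icc T ts := ⟨hs.trans hr.1, hr.2⟩
        have hy := hYneg r hr'
        exact (h.Yinv_along hσ (hC r hr').1 (hC r hr').2 (by linarith)).fun_neg)
      (fun r hr' => by
        have := ha _ (hr r hr').le (hC r ⟨hs.trans hr'.1.le, hr'.2.le⟩).1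
        linarith)
    have h2 : (Y p u v (-1) (s, C s))⁻¹ < 0 := inv_lt_zero.2 (by
      have := hYneg s ⟨hs, hst⟩; linarith)
    have h3 : -(Y p u v (-1) (ts, C ts))⁻¹ ≤ κ⁻¹ := by
      rw [← inv_neg]
      exact inv_anti₀ hκ (by linarith)
    have h4 : a3 * (ts - s) ≤ κ⁻¹ := by linarith
    calc a3 * κ * (ts - s) = a3 * (ts - s) * κ := by ring
      _ ≤ κ⁻¹ * κ := by gcongr
      _ = 1 := inv_mul_cancel₀ hκ.ne'
  have hRc : ContinuousOn (fun t => R p u v 1 (t, C t)) (Icc T ts) :=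
    (h.R_cont 1).comp_continuousOn (continuousOn_id.prodMk hC.cont)
  have hZc : IsCompact (Icc T ts ∩ {t | R p u v 1 (t, C t) ≤ Rs - η}) :=
    isCompact_Icc.of_isClosed_subset
      (hRc.preimage_isClosed_of_isClosed isClosed_Icc isClosed_Iic) inter_subset_left
  have hZne : (Icc T ts ∩ {t | R p u v 1 (t, C t) ≤ Rs - η}).Nonempty := by
    by_contra hcon
    rw [not_nonempty_iff_eq_empty] at hcon
    have hall : ∀ t ∈ Icc T ts, -(3 * M) < u (t, C t) := by
      intro t ht
      refine hu3 t ht ?_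
      by_contra! hle
      have : t ∈ Icc T ts ∩ {t | R p u v 1 (t, C t) ≤ Rs - η} := ⟨ht, hle⟩
      rw [hcon] at this
      exact this
    have h1 := hYinv T le_rfl hT.le (fun r hr => hall r (Ioo_subset_Icc_self hr))
    have hshort : ts - T < 1 := by nlinarith
    rcases hexit with he | he
    · linarith
    · have hc3 := c_nonneg (p := p) (-(3 * M))
      have h2 := slope_lower (f := C) (k := -c p (-(3 * M))) hT.le (fun r hr => (hC r hr).2)
        (fun r hr => by
          have := h.c_anti (hall r (Ioo_subset_Icc_self hr)).le
          linarith)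
      have h3 := slope_lower (f := fun t => -C t) (k := 0) hT.le (fun r hr => (hC r hr).2.fun_neg)
        (fun r hr => by have := c_nonneg (p := p) (u (r, C r)); linarith)
      have h4 : |C T| - |C ts| ≤ |C T - C ts| := abs_sub_abs_le_abs_sub _ _
      rw [abs_of_nonneg (by linarith : 0 ≤ C T - C ts)] at h4
      nlinarith
  obtain ⟨P, ⟨hPI, hPR⟩, hPmax⟩ := hZc.exists_isGreatest hZne
  rw [mem_ofPred_eq] at hPR
  have hPlt : P < ts := lt_of_le_of_ne hPI.2 (by rintro rfl; linarith)
  have hgood : ∀ t ∈ Ioc P ts, Rs - η < R p u v 1 (t, C t) := by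
    intro t ht
    by_contra! hh
    exact not_le.2 ht.1 (hPmax ⟨⟨hPI.1.trans ht.1.le, ht.2⟩, hh⟩)
  have hgood' : ∀ t ∈ Ioc P ts, -(3 * M) < u (t, C t) := fun t ht =>
    hu3 t ⟨hPI.1.trans ht.1.le, ht.2⟩ (hgood t ht)
  exact ⟨P, hPI.1, hPlt, hYinv P hPI.1 hPlt.le (fun r hr => hgood' r ⟨hr.1, hr.2.le⟩), hPR,
    fun t ht => ⟨hgood t ht, hgood' t ht⟩⟩

/-- Since `R₁` rises by `η` over such a segment within the time `1 / (a₃ κ)`, and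
`d/dt R₁ = -2 √c Y₁` along it, the derivative `Y₁` is very negative somewhere on it. -/
lemma Sol.segment_slope (h : Sol p u v) {M a3 κ η : ℝ} (ha3 : 0 < a3) (hκ : 0 < κ)
    (hη : 0 < η) {C : ℝ → ℝ} {P ts : ℝ} (hP : P < ts) (hC : IsChar p u (-1) C P ts)
    (hlen : a3 * κ * (ts - P) ≤ 1)
    (hR : R p u v 1 (P, C P) ≤ R p u v 1 (ts, C ts) - η)
    (hu3 : ∀ t ∈ Ioc P ts, -(3 * M) < u (t, C t)) :
    ∃ t ∈ Ioo P ts,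
      2 * Real.sqrt (c p (-(3 * M))) * Y p u v 1 (t, C t) ≤ -(η * (a3 * κ)) := by
  have hd : ∀ t ∈ Icc P ts, HasDerivAt (fun t => R p u v 1 (t, C t))
      (-2 * Real.sqrt (c p (u (t, C t))) * Y p u v 1 (t, C t)) t := by
    intro t ht
    refine (h.R_along (by norm_num) (hC t ht).1.le (hC t ht).2).congr_deriv ?_
    unfold Y
    linear_combination (2 * W p u v 1 (t, C t)) *
      Real.sq_sqrt (c_nonneg (p := p) (u (t, C t)))
  obtain ⟨t, ht, hs⟩ := exists_hasDerivAt_eq_slope _ _ hP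
    (fun t ht => (hd t ht).continuousAt.continuousWithinAt)
    (fun t ht => hd t (Ioo_subset_Icc_self ht))
  refine ⟨t, ht, ?_⟩
  have hpos := sub_pos.2 hP
  rw [eq_div_iff hpos.ne'] at hs
  have hsq := Real.sqrt_le_sqrt (h.c_anti (hu3 t ⟨ht.1, ht.2.le⟩).le)
  have hs0 := Real.sqrt_pos.2 (h.c_pos (hC t (Ioo_subset_Icc_self ht)).1)
  set y := Y p u v 1 (t, C t)
  set s := Real.sqrt (c p (u (t, C t)))
  set S := Real.sqrt (c p (-(3 * M)))
  have h1 : η ≤ (-2 * s * y) * (ts - P) := by rw [hs]; linarith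
  have hg : 0 < -2 * s * y := by
    by_contra! hle
    nlinarith [mul_nonneg (neg_nonneg.2 hle) hpos.le]
  have hy : y < 0 := by
    by_contra! hle
    nlinarith [mul_nonneg hs0.le hle]
  have hk : 0 < a3 * κ := mul_pos ha3 hκ
  have h2 : η * (a3 * κ) ≤ -2 * s * y := by
    calc η * (a3 * κ) ≤ (-2 * s * y) * (ts - P) * (a3 * κ) := by gcongr
      _ = (-2 * s * y) * (a3 * κ * (ts - P)) := by ring
      _ ≤ (-2 * s * y) * 1 := by gcongr
      _ = _ := mul_one _
  nlinarith [mul_le_mul_of_nonneg_right hsq (neg_nonneg.2 hy.le)]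
/-! ### Regions between two curves -/

lemma isCompact_between {l r : ℝ → ℝ} {a b : ℝ} (hl : ContinuousOn l (Icc a b))
    (hr : ContinuousOn r (Icc a b)) :
    IsCompact {z : ℝ × ℝ | z.1 ∈ Icc a b ∧ l z.1 ≤ z.2 ∧ z.2 ≤ r z.1} := by
  obtain ⟨m, hm⟩ := (isCompact_Icc.image_of_continuousOn hl).bddBelow
  obtain ⟨n, hn⟩ := (isCompact_Icc.image_of_continuousOn hr).bddAbove
  have hcl : IsClosed (Icc a b ×ˢ (univ : Set ℝ)) := isClosed_Icc.prod isClosed_univ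
  have hfst : MapsTo Prod.fst (Icc a b ×ˢ (univ : Set ℝ)) (Icc a b) := fun z hz => hz.1
  have c1 : IsClosed ((Icc a b ×ˢ (univ : Set ℝ)) ∩ {z : ℝ × ℝ | 0 ≤ z.2 - l z.1}) :=
    (continuousOn_snd.sub (hl.comp continuousOn_fst hfst)).preimage_isClosed_of_isClosed hcl
      isClosed_Ici
  have c2 : IsClosed ((Icc a b ×ˢ (univ : Set ℝ)) ∩ {z : ℝ × ℝ | 0 ≤ r z.1 - z.2}) :=
    ((hr.comp continuousOn_fst hfst).sub continuousOn_snd).preimage_isClosed_of_isClosed hcl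
      isClosed_Ici
  refine ((isCompact_Icc (a := a) (b := b)).prod (isCompact_Icc (a := m) (b := n))).of_isClosed_subset
    (s := _) ?_ ?_
  · convert c1.inter c2 using 1
    ext z
    simp only [mem_ofPred_eq, mem_inter_iff, mem_prod, mem_univ, and_true, sub_nonneg]
    tauto
  · rintro z ⟨hz, h1, h2⟩
    exact ⟨hz, (hm ⟨_, hz, rfl⟩).trans h1, h2.trans (hn ⟨_, hz, rfl⟩)⟩

lemma between_mem_nhds {l r : ℝ → ℝ} {a b : ℝ} {z : ℝ × ℝ} (hz : z.1 ∈ Ioo a b)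
    (hl : ContinuousAt l z.1) (hr : ContinuousAt r z.1) (h1 : l z.1 < z.2) (h2 : z.2 < r z.1) :
    {z : ℝ × ℝ | z.1 ∈ Icc a b ∧ l z.1 ≤ z.2 ∧ z.2 ≤ r z.1} ∈ 𝓝 z := by
  have e1 : ∀ᶠ y in 𝓝 z, y.1 ∈ Icc a b := continuousAt_fst (Icc_mem_nhds hz.1 hz.2)
  have e2 : ∀ᶠ y in 𝓝 z, l y.1 < y.2 :=
    (ContinuousAt.comp (g := l) hl continuousAt_fst).eventually_lt continuousAt_snd h1
  have e3 : ∀ᶠ y in 𝓝 z, y.2 < r y.1 :=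
    continuousAt_snd.eventually_lt (ContinuousAt.comp (g := r) hr continuousAt_fst) h2
  filter_upwards [e1, e2, e3] with y hy1 hy2 hy3 using ⟨hy1, hy2.le, hy3.le⟩

lemma deriv_nonneg_of_right_min {φ : ℝ → ℝ} {t d : ℝ} (hφ : HasDerivAt φ d t)
    (hmin : ∀ᶠ s in 𝓝[>] t, φ t ≤ φ s) : 0 ≤ d := by
  have hs := (hasDerivAt_iff_tendsto_slope.1 hφ).mono_left
    (nhdsWithin_mono t (s := Ioi t) (fun s hs => ne_of_gt hs))
  refine ge_of_tendsto hs ?_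
  filter_upwards [hmin, self_mem_nhdsWithin] with s h1 h2
  rw [slope_def_field]
  exact div_nonneg (by linarith) (by have : t < s := h2; linarith)

lemma IsChar.anti {C : ℝ → ℝ} {a b : ℝ} (hC : IsChar p u (-1) C a b) {s t : ℝ} (hs : a ≤ s)
    (hst : s ≤ t) (ht : t ≤ b) : C t ≤ C s := by
  have h3 := slope_lower (f := fun t => -C t) (k := 0) hst
    (fun r hr => (hC r ⟨hs.trans hr.1, hr.2.trans ht⟩).2.fun_neg)
    (fun r hr => by have := c_nonneg (p := p) (u (r, C r)); linarith)
  linarith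

lemma IsChar.incr {C : ℝ → ℝ} {a b : ℝ} (hC : IsChar p u 1 C a b) {s t : ℝ} (hs : a ≤ s)
    (hst : s ≤ t) (ht : t ≤ b) : C s ≤ C t := by
  have h3 := slope_lower (f := C) (k := 0) hst
    (fun r hr => (hC r ⟨hs.trans hr.1, hr.2.trans ht⟩).2)
    (fun r hr => by have := c_nonneg (p := p) (u (r, C r)); linarith)
  linarith

/-- A curvilinear quadrilateral bounded on the left by `C` and then `Γ`, on the right by `Λ` and
then `D`, all four characteristic, with `C`, `D` of speed `-c` and `Γ`, `Λ` of speed `c`. By the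
maximum principle `u ≤ 0` inside, so `R₁` is transported forward there with speed `c`, and along
that direction one can leave the region only through `Λ`, `D` or `Γ`. Hence the infimum of `R₁`
over the region is attained on those sides, so over `D`; no point of `C` can have a
smaller value. -/
lemma Sol.quadrilateral (h : Sol p u v) {C Γ Λ D : ℝ → ℝ} {s0 A t' B P m : ℝ}
    (hsA : s0 < A) (hAt : A < t') (htB : t' < B)
    (hC : IsChar p u (-1) C s0 A) (hΓ : IsChar p u 1 Γ A B)
    (hΛ : IsChar p u 1 Λ s0 t') (hD : IsChar p u (-1) D t' B)
    (hCΓ : C A = Γ A) (hCΛ : C s0 = Λ s0) (hΛD : Λ t' = D t') (hDΓ : D B = Γ B)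
    (hlt1 : ∀ t ∈ Ioc s0 A, C t < Λ t)
    (hm : ∀ t ∈ Icc t' B, m < R p u v 1 (t, D t)) (hP : P ∈ Icc s0 A) :
    m < R p u v 1 (P, C P) := by
  by_contra! hPR
  have hσ : (1 : ℝ) ^ 2 = 1 := by norm_num
  set l : ℝ → ℝ := fun t => C (min t A) + Γ (max t A) - Γ A with hl
  set r : ℝ → ℝ := fun t => Λ (min t t') + D (max t t') - D t' with hr
  have l1 : ∀ t, t ≤ A → l t = C t := fun t ht => by simp [hl, ht]
  have l2 : ∀ t, A ≤ t → l t = Γ t := fun t ht => by simp [hl, ht, hCΓ]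
  have r1 : ∀ t, t ≤ t' → r t = Λ t := fun t ht => by simp [hr, ht]
  have r2 : ∀ t, t' ≤ t → r t = D t := fun t ht => by simp [hr, ht, hΛD]
  have hlc : ContinuousOn l (Icc s0 B) := by
    refine ((hC.cont.comp (continuous_id.min continuous_const).continuousOn ?_).add
      (hΓ.cont.comp (continuous_id.max continuous_const).continuousOn ?_)).sub continuousOn_const
    · exact fun t ht => ⟨le_min ht.1 hsA.le, min_le_right _ _⟩
    · exact fun t ht => ⟨le_max_right _ _, max_le ht.2 (hAt.trans htB).le⟩
  have hrc : ContinuousOn r (Icc s0 B) := by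
    refine ((hΛ.cont.comp (continuous_id.min continuous_const).continuousOn ?_).add
      (hD.cont.comp (continuous_id.max continuous_const).continuousOn ?_)).sub continuousOn_const
    · exact fun t ht => ⟨le_min ht.1 (hsA.trans hAt).le, min_le_right _ _⟩
    · exact fun t ht => ⟨le_max_right _ _, max_le ht.2 htB.le⟩
  have hul : ∀ t ∈ Icc s0 B, u (t, l t) < 0 := by
    intro t ht
    rcases le_total t A with h1 | h1
    · rw [l1 t h1]; exact (hC t ⟨ht.1, h1⟩).1
    · rw [l2 t h1]; exact (hΓ t ⟨h1, ht.2⟩).1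
  have hur : ∀ t ∈ Icc s0 B, u (t, r t) < 0 := by
    intro t ht
    rcases le_total t t' with h1 | h1
    · rw [r1 t h1]; exact (hΛ t ⟨ht.1, h1⟩).1
    · rw [r2 t h1]; exact (hD t ⟨h1, ht.2⟩).1
  set K := {z : ℝ × ℝ | z.1 ∈ Icc s0 B ∧ l z.1 ≤ z.2 ∧ z.2 ≤ r z.1} with hK
  have hKc : IsCompact K := isCompact_between hlc hrc
  have hends : ∀ z ∈ K, z.1 = s0 ∨ z.1 = B → z.2 = r z.1 := by
    rintro ⟨t, x⟩ ⟨-, hz2, hz3⟩ (rfl | rfl)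
    · refine le_antisymm hz3 ?_
      simp only at hz2 hz3 ⊢
      rwa [r1 _ (hsA.trans hAt).le, ← hCΛ, ← l1 _ hsA.le]
    · refine le_antisymm hz3 ?_
      simp only at hz2 hz3 ⊢
      rwa [r2 _ htB.le, hDΓ, ← l2 _ (hAt.trans htB).le]
  have hcl : ∀ t ∈ Ioo s0 B, ContinuousAt l t := fun t ht =>
    hlc.continuousAt (Icc_mem_nhds ht.1 ht.2)
  have hcr : ∀ t ∈ Ioo s0 B, ContinuousAt r t := fun t ht =>
    hrc.continuousAt (Icc_mem_nhds ht.1 ht.2)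
  have hu0 : ∀ z ∈ K, u z ≤ 0 := by
    refine h.max_principle hKc fun z hz => ?_
    by_cases e1 : z.2 = r z.1
    · left
      have := hur z.1 hz.1
      rw [← e1] at this
      exact this.le
    by_cases e2 : l z.1 = z.2
    · left
      have := hul z.1 hz.1
      rw [e2] at this
      exact this.le
    right
    have hzI : z.1 ∈ Ioo s0 B :=
      ⟨lt_of_le_of_ne hz.1.1 (fun e => e1 (hends z hz (Or.inl e.symm))),
        lt_of_le_of_ne hz.1.2 (fun e => e1 (hends z hz (Or.inr e)))⟩
    exact between_mem_nhds hzI (hcl _ hzI) (hcr _ hzI) (lt_of_le_of_ne hz.2.1 e2)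
      (lt_of_le_of_ne hz.2.2 e1)
  -- the least value `m1` of `R₁` on `D`
  obtain ⟨tm, htm, hmin⟩ := isCompact_Icc.exists_isMinOn (nonempty_Icc.2 htB.le)
    ((h.R_cont 1).comp_continuousOn (continuousOn_id.prodMk hD.cont))
  set m1 := R p u v 1 (tm, D tm) with hm1
  have hmm : m < m1 := hm tm htm
  have hRD : ∀ t ∈ Icc t' B, m1 ≤ R p u v 1 (t, D t) := fun t ht => hmin ht
  have hRr : ∀ t ∈ Icc s0 B, m1 ≤ R p u v 1 (t, r t) := by
    intro t ht
    rcases le_total t t' with h1 | h1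
    · rw [r1 t h1, hΛ.R_const h hσ ht.1 h1 le_rfl, hΛD]
      exact hRD t' ⟨le_rfl, htB.le⟩
    · rw [r2 t h1]; exact hRD t ⟨h1, ht.2⟩
  have hRΓ : ∀ t ∈ Icc A B, m1 ≤ R p u v 1 (t, Γ t) := by
    intro t ht
    rw [hΓ.R_const h hσ ht.1 ht.2 le_rfl, ← hDΓ]
    exact hRD B ⟨htB.le, le_rfl⟩
  have hPK : ((P, C P) : ℝ × ℝ) ∈ K := by
    refine ⟨⟨hP.1, by linarith [hP.2]⟩, (l1 P hP.2).le, ?_⟩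
    simp only
    rw [r1 P (by linarith [hP.2])]
    rcases hP.1.eq_or_lt with rfl | hlt
    · exact hCΛ.le
    · exact (hlt1 P ⟨hlt, hP.2⟩).le
  set δ := (m1 - m) / (B - s0 + 1) with hδ
  have hden : 0 < B - s0 + 1 := by linarith
  have hδ0 : 0 < δ := div_pos (by linarith) hden
  have hδe : δ * (B - s0 + 1) = m1 - m := by rw [hδ]; field_simp
  obtain ⟨z0, hz0, hz0min⟩ := hKc.exists_isMinOn ⟨_, hPK⟩
    (f := fun z => R p u v 1 z - δ * z.1)
    ((h.R_cont 1).sub (continuous_const.mul continuous_fst)).continuousOn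
  have hsmall : R p u v 1 z0 < m1 := by
    have h1 : R p u v 1 z0 - δ * z0.1 ≤ R p u v 1 (P, C P) - δ * P := hz0min hPK
    nlinarith [hz0.1.2, hP.1]
  have e1 : z0.2 ≠ r z0.1 := by
    intro e
    have := hRr z0.1 hz0.1
    rw [← e] at this
    exact not_lt.2 this hsmall
  have hzI : z0.1 ∈ Ioo s0 B :=
    ⟨lt_of_le_of_ne hz0.1.1 (fun e => e1 (hends z0 hz0 (Or.inl e.symm))),
      lt_of_le_of_ne hz0.1.2 (fun e => e1 (hends z0 hz0 (Or.inr e)))⟩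
  have hzr : z0.2 < r z0.1 := lt_of_le_of_ne hz0.2.2 e1
  obtain ⟨t, x⟩ := z0
  simp only at hzI hzr hsmall e1
  have hc0 := c_nonneg (p := p) (u (t, x))
  set g : ℝ → ℝ := fun s => x + c p (u (t, x)) * (s - t) with hg
  have hgt : g t = x := by simp [hg]
  have hgd : HasDerivAt g (c p (u (t, g t))) t := by
    rw [hgt]
    exact ((((hasDerivAt_id t).sub_const t).const_mul (c p (u (t, x)))).const_add x).congr_deriv
      (by ring)
  have hleft : ∀ᶠ s in 𝓝[>] t, l s ≤ g s := by
    rcases hz0.2.1.eq_or_lt with e | hlt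
    · simp only at e
      have htA : t < A := by
        by_contra! hle
        have := hRΓ t ⟨hle, hzI.2.le⟩
        rw [← l2 t hle, e] at this
        exact not_lt.2 this hsmall
      filter_upwards [Ioo_mem_nhdsGT htA] with s hs
      rw [l1 s hs.2.le]
      calc C s ≤ C t := hC.anti hzI.1.le hs.1.le hs.2.le
        _ = x := by rw [← l1 t htA.le, e]
        _ ≤ g s := by
          have := mul_nonneg hc0 (sub_nonneg.2 hs.1.le)
          simp only [hg]; linarith
    · have := (hcl t hzI).eventually_lt hgd.continuousAt (by rw [hgt]; exact hlt)
      exact (this.filter_mono nhdsWithin_le_nhds).mono fun s hs => hs.le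
  have hright : ∀ᶠ s in 𝓝[>] t, g s < r s :=
    (hgd.continuousAt.eventually_lt (hcr t hzI) (by rw [hgt]; exact hzr)).filter_mono
      nhdsWithin_le_nhds
  have hφ : HasDerivAt (fun s => R p u v 1 (s, g s) - δ * s) (-δ) t := by
    have := h.R_along hσ (γ := g) (by rw [hgt]; exact hu0 _ hz0) hgd
    exact (this.sub ((hasDerivAt_id t).const_mul δ)).congr_deriv (by ring)
  have := deriv_nonneg_of_right_min hφ (by
    filter_upwards [hleft, hright, Ioo_mem_nhdsGT hzI.2] with s h1 h2 h3
    rw [hgt]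
    exact hz0min (show ((s, g s) : ℝ × ℝ) ∈ K from
      ⟨⟨hzI.1.le.trans h3.1.le, h3.2.le⟩, h1, h2.le⟩))
  linarith

/-! ### Intersecting the two backward characteristics -/

/-- If the characteristic `C` of speed `-c` is followed backward from a point with `Y₋₁ < 0`, it
moves to the right by at least a fixed rate times the elapsed time, up to an additive constant:
either `|u|` is large and so is the speed `c`, or `|u|` is bounded and the bounded variation
of `1 / Y₋₁` pays for the elapsed time. -/
lemma Sol.escape (h : Sol p u v) : ∃ θ > 0, ∃ k > 0, ∀ (C : ℝ → ℝ) (T A : ℝ), T ≤ A →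
    IsChar p u (-1) C T A → Y p u v (-1) (A, C A) < 0 →
    θ * (A - T) ≤ C T - C A + k / -Y p u v (-1) (A, C A) := by
  have hσ : (-1 : ℝ) ^ 2 = 1 := by norm_num
  obtain ⟨a1, ha1, ha⟩ := h.acoef_lower (L := 1) one_pos
  have hθ := h.c_pos (w := -1) (by norm_num)
  refine ⟨c p (-1), hθ, c p (-1) / a1, by positivity, fun C T A hTA hC hY => ?_⟩
  set k := c p (-1) / a1 with hk
  have hk0 : 0 < k := by positivity
  have hneg : ∀ t ∈ Icc T A, Y p u v (-1) (t, C t) < 0 := fun t ht =>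
    (hC.Y_mono h hσ ht.1 ht.2 le_rfl).trans_lt hY
  have h1 := slope_lower (f := fun t => -C t + k * -(Y p u v (-1) (t, C t))⁻¹) (k := c p (-1)) hTA
    (fun r hr => (hC r hr).2.fun_neg.add
      ((h.Yinv_along hσ (hC r hr).1 (hC r hr).2 (hneg r hr).ne).fun_neg.const_mul k))
    (fun r hr => by
      have hr' := Ioo_subset_Icc_self hr
      have hu := (hC r hr').1
      have hc := c_nonneg (p := p) (u (r, C r))
      have hap := h.acoef_pos hu
      rcases le_total (u (r, C r)) (-1) with hle | hle
      · have := h.c_anti hle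
        nlinarith [mul_pos hk0 hap]
      · have h2 := mul_le_mul_of_nonneg_left (ha _ hle hu) hk0.le
        have h3 : k * a1 = c p (-1) := by rw [hk]; field_simp
        linarith)
  have h2 : (Y p u v (-1) (T, C T))⁻¹ < 0 := inv_lt_zero.2 (hneg T ⟨le_rfl, hTA⟩)
  have h3 : k / -Y p u v (-1) (A, C A) = k * -(Y p u v (-1) (A, C A))⁻¹ := by
    rw [div_eq_mul_inv, inv_neg]
  rw [h3]
  nlinarith [mul_neg_of_pos_of_neg hk0 h2]

/-- A compressive characteristic `Λ` of speed `c` issued backward from a point to the right of the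
expansive characteristic `Γ` cannot cross `Γ`, so it meets the compressive characteristic `C` of
speed `-c` issued backward from a point of `Γ`. -/
lemma Sol.meet (h : Sol p u v) {Γ : ℝ → ℝ} {A t' x' E : ℝ} (hE : 0 ≤ E) (hAt : A < t')
    (hΓ : IsChar p u 1 Γ A t') (hΓY : 0 < Y p u v 1 (A, Γ A))
    (hAY : Y p u v (-1) (A, Γ A) < 0) (hu' : u (t', x') < 0) (hY' : Y p u v 1 (t', x') < 0)
    (hx' : Γ t' < x') :
    ∃ Λ C : ℝ → ℝ, ∃ s0 T, T ≤ s0 ∧ s0 < A ∧ IsChar p u 1 Λ s0 t' ∧ IsChar p u (-1) C T A ∧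
      Λ t' = x' ∧ C A = Γ A ∧ C s0 = Λ s0 ∧ (∀ t ∈ Ioc s0 A, C t < Λ t) ∧
      (T ≤ A - 1 ∨ |Γ A| + E ≤ |C T|) := by
  have hσ : (1 : ℝ) ^ 2 = 1 := by norm_num
  have hσ' : (-1 : ℝ) ^ 2 = 1 := by norm_num
  obtain ⟨θ, hθ, k, hk, hesc⟩ := h.escape
  have huA : u (A, Γ A) < 0 := (hΓ A ⟨le_rfl, hAt.le⟩).1
  set X := |Γ A| + |x'| + E + 1 with hX
  set G := |x'| + |Γ A| + k / -Y p u v (-1) (A, Γ A) with hG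
  have hG0 : 0 ≤ G := by
    have : 0 ≤ k / -Y p u v (-1) (A, Γ A) := div_nonneg hk.le (by linarith)
    positivity
  set Tl := A - 1 - G / θ with hTl
  have hTlA : Tl ≤ A - 1 := by
    have : 0 ≤ G / θ := by positivity
    linarith
  have hxX : |x'| < X := by have := abs_nonneg (Γ A); linarith
  have hAX : |Γ A| < X := by have := abs_nonneg x'; linarith
  obtain ⟨Λ, T1, hT1, hT1t, hΛt, hΛ, hΛe⟩ := h.backward_char hσ hu'
    ((h.Y_neg_iff hu').1 hY') (T := Tl) (by linarith) hxX
  obtain ⟨C, T2, hT2, hT2A, hCA, hC, hCe⟩ := h.backward_char hσ' huA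
    ((h.Y_neg_iff huA).1 hAY) (T := Tl) (by linarith) hAX
  have hsep : ∀ s, T1 ≤ s → A ≤ s → s ≤ t' → Γ s < Λ s := by
    intro s h1 h2 h3
    by_contra! hle
    have hcont : ContinuousOn (fun t => Λ t - Γ t) (Icc s t') :=
      (hΛ.mono h1 le_rfl).cont.sub (hΓ.mono h2 le_rfl).cont
    obtain ⟨r, hr, hr0⟩ := intermediate_value_Icc h3 hcont
      (show (0 : ℝ) ∈ Icc (Λ s - Γ s) (Λ t' - Γ t') by
        constructor <;> [linarith; (rw [hΛt]; linarith)])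
    have e : Λ r = Γ r := by simp only at hr0; linarith
    have y1 := hΛ.Y_mono h hσ (h1.trans hr.1) hr.2 le_rfl
    have y2 := hΓ.Y_mono h hσ le_rfl (h2.trans hr.1) hr.2
    rw [hΛt, e] at y1
    linarith
  have hT1A : T1 < A := by
    by_contra! hle
    have h1 := hsep T1 le_rfl hle hT1t.le
    have h2 := hΓ.incr le_rfl hle hT1t.le
    have h3 := hΛ.incr le_rfl hT1t.le le_rfl
    rw [hΛt] at h3
    rcases hΛe with e | e
    · linarith
    · have h4 : |Λ T1| < X := abs_lt.2
        ⟨by linarith [(abs_lt.1 hAX).1], by linarith [(abs_lt.1 hxX).2]⟩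
      linarith
  set T0 := max T1 T2 with hT0
  have hT0A : T0 < A := max_lt hT1A hT2A
  have h1T : T1 ≤ T0 := le_max_left _ _
  have h2T : T2 ≤ T0 := le_max_right _ _
  -- at the time `T0` a curve has left the box on the favourable side, or the escape estimate applies
  have hΛle : Λ T0 ≤ x' := by
    rw [← hΛt]; exact hΛ.incr h1T (hT0A.trans hAt).le le_rfl
  have hCge : Γ A ≤ C T0 := by
    rw [← hCA]; exact hC.anti h2T hT0A.le le_rfl
  have hbx := abs_lt.1 hxX
  have hbA := abs_lt.1 hAX
  have hstart : Λ T0 ≤ C T0 := by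
    rcases le_total T2 T1 with hle | hle
    · have e0 : T0 = T1 := max_eq_left hle
      rcases hΛe with e | e
      · have e2 : T2 = Tl := le_antisymm (hle.trans e.le) hT2
        have h4 := hesc C T2 A hT2A.le hC (by rw [hCA]; exact hAY)
        rw [hCA, e2] at h4
        have h5 : θ * (A - Tl) = θ + G := by rw [hTl]; field_simp; ring
        rw [e0, e] at hΛle ⊢
        have h6 := le_abs_self x'
        have h7 := neg_abs_le (Γ A)
        linarith
      · rw [← e0] at e
        rcases (abs_eq (by linarith [abs_nonneg x'])).1 e with e | e <;> linarith
    · have e0 : T0 = T2 := max_eq_right hle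
      rcases hCe with e | e
      · have e2 : T1 = T2 := le_antisymm hle (e.le.trans hT1)
        have h4 := hesc C T2 A hT2A.le hC (by rw [hCA]; exact hAY)
        rw [hCA, e] at h4
        have h5 : θ * (A - Tl) = θ + G := by rw [hTl]; field_simp; ring
        rw [e0, e] at hΛle ⊢
        have h6 := le_abs_self x'
        have h7 := neg_abs_le (Γ A)
        linarith
      · rw [← e0] at e
        rcases (abs_eq (by linarith [abs_nonneg x'])).1 e with e | e <;> linarith
  have hcont : ContinuousOn (fun t => C t - Λ t) (Icc T0 A) :=
    (hC.mono h2T le_rfl).cont.sub (hΛ.mono h1T hAt.le).cont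
  have hZc : IsCompact (Icc T0 A ∩ {t | 0 ≤ C t - Λ t}) :=
    isCompact_Icc.of_isClosed_subset
      (hcont.preimage_isClosed_of_isClosed isClosed_Icc isClosed_Ici) inter_subset_left
  obtain ⟨s0, ⟨hs0I, hs0⟩, hs0max⟩ := hZc.exists_isGreatest
    ⟨T0, ⟨le_rfl, hT0A.le⟩, sub_nonneg.2 hstart⟩
  rw [mem_ofPred_eq] at hs0
  have hA' := hsep A hT1A.le le_rfl hAt.le
  have hs0A : s0 < A := lt_of_le_of_ne hs0I.2 (by rintro rfl; rw [hCA] at hs0; linarith)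
  have hlt : ∀ t ∈ Ioc s0 A, C t < Λ t := by
    intro t ht
    by_contra! hh
    exact not_le.2 ht.1 (hs0max ⟨⟨hs0I.1.trans ht.1.le, ht.2⟩, sub_nonneg.2 hh⟩)
  have hle : C s0 - Λ s0 ≤ 0 := by
    have hcl : closure (Ioo s0 A) = Icc s0 A := closure_Ioo hs0A.ne
    have := le_on_closure (f := fun t => C t - Λ t) (g := fun _ => 0) (s := Ioo s0 A)
      (fun t ht => by have := hlt t ⟨ht.1, ht.2.le⟩; linarith)
      (by rw [hcl]; exact hcont.mono (Icc_subset_Icc_left hs0I.1)) continuousOn_const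
    exact this (by rw [hcl]; exact ⟨le_rfl, hs0A.le⟩)
  refine ⟨Λ, C, s0, T2, h2T.trans hs0I.1, hs0A, hΛ.mono (h1T.trans hs0I.1) le_rfl, hC, hΛt, hCA,
    by linarith, hlt, ?_⟩
  rcases hCe with e | e
  · left; linarith
  · right; rw [e]; linarith [abs_nonneg x']

/-! ### The dichotomy for the first family -/

/-- Along a forward-complete characteristic of speed `c` with `Y₁ > 0` at the initial time,
`-u → ∞`. -/
lemma Sol.tendsto_of_pos (h : Sol p u v) {Γ : ℝ → ℝ} {t1 : ℝ} (hΓ : ∀ b, IsChar p u 1 Γ t1 b)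
    (hY : 0 < Y p u v 1 (t1, Γ t1)) : Tendsto (fun t => -u (t, Γ t)) atTop atTop := by
  by_contra hcon
  have hσ : (1 : ℝ) ^ 2 = 1 := by norm_num
  obtain ⟨M, hM, hf⟩ : ∃ M : ℝ, 0 < M ∧ ∃ᶠ t in atTop, -M < u (t, Γ t) := by
    rw [tendsto_atTop] at hcon
    push Not at hcon
    obtain ⟨b, hb⟩ := hcon
    refine ⟨max 1 b, by positivity, hb.mono fun t ht => ?_⟩
    have := le_max_right 1 b
    linarith
  have hYpos : ∀ t, t1 ≤ t → 0 < Y p u v 1 (t, Γ t) := fun t ht =>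
    hY.trans_le ((hΓ t).Y_mono h hσ le_rfl ht le_rfl)
  have hsweep := h.sweep hΓ hY hM hf
  obtain ⟨a3, ha3, ha⟩ := h.acoef_lower (L := 3 * M) (by linarith)
  set η := 2 * (qfun p (-(3 * M)) - qfun p (-(2 * M))) with hη
  have hη0 : 0 < η := by
    have := h.q_lt (a := -(3 * M)) (b := -(2 * M)) (by linarith) (by linarith)
    linarith
  have hC3 := h.c_pos (w := -(3 * M)) (by linarith)
  set C3 := c p (-(3 * M)) with hC3d
  have hS := Real.sqrt_pos.2 hC3
  -- the lower left corner `(A, Γ A)`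
  obtain ⟨A, -, hA1, huA, hYA⟩ := hsweep (2 / a3) t1
  have h2a : 0 < 2 / a3 := by positivity
  obtain ⟨N, hN⟩ := ((isCompact_Icc (a := A - 1) (b := A)).prod
    (isCompact_Icc (a := Γ A) (b := Γ A + C3))).exists_bound_of_continuousOn
      (h.Y_cont 1).continuousOn
  have hN0 : 0 ≤ N := (norm_nonneg _).trans
    (hN (A, Γ A) ⟨⟨by linarith, le_rfl⟩, le_rfl, by linarith⟩)
  -- the upper corner `(B, Γ B)`, so compressive that `Y₁ < -N` somewhere on the segment below it
  set κ := max (2 / a3) ((2 * Real.sqrt C3 * N + 1) / (η * a3)) with hκ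
  have hκ0 : 0 < κ := lt_of_lt_of_le h2a (le_max_left _ _)
  have hκ2 : 2 ≤ a3 * κ := by
    have := le_max_left (2 / a3) ((2 * Real.sqrt C3 * N + 1) / (η * a3))
    rw [div_le_iff₀ ha3] at this
    linarith
  have hκN : 2 * Real.sqrt C3 * N + 1 ≤ η * (a3 * κ) := by
    have := le_max_right (2 / a3) ((2 * Real.sqrt C3 * N + 1) / (η * a3))
    rw [div_le_iff₀ (mul_pos hη0 ha3)] at this
    linarith
  obtain ⟨B, hAB, hB1, huB, hYB⟩ := hsweep κ (A + 1)
  have huB0 : u (B, Γ B) < 0 := (hΓ B B ⟨hB1, le_rfl⟩).1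
  obtain ⟨D, TD, hTD, hTDB, hDB, hD, hDe⟩ := h.backward_char (σ := -1) (by norm_num) huB0
    ((h.Y_neg_iff huB0).1 (by linarith)) (T := B - 1) (X := |Γ B| + C3 + 1)
    (by linarith) (by linarith)
  obtain ⟨Q, hQT, hQB, hQlen, hQR, hQ⟩ := h.segment hM ha hκ0 (by linarith) hTDB hD
    (by rw [hDB]; exact huB) (by rw [hDB]; exact hYB)
    (by rw [hDB]; exact hDe.imp (fun e => e.le) (fun e => e.ge))
  obtain ⟨t', ht', hYt'⟩ := h.segment_slope ha3 hκ0 hη0 hQB (hD.mono hQT le_rfl) hQlen hQR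
    (fun t ht => (hQ t ht).2)
  have hYlt : Y p u v 1 (t', D t') < -N := by
    have h1 : 2 * Real.sqrt C3 * Y p u v 1 (t', D t') < 2 * Real.sqrt C3 * -N := by linarith
    exact lt_of_mul_lt_mul_left h1 (by positivity)
  have hAt' : A < t' := by
    have h1 : B - Q ≤ 1 / 2 := by
      have := sub_pos.2 hQB
      nlinarith
    linarith [ht'.1]
  have hDt := hD t' ⟨hQT.trans ht'.1.le, ht'.2.le⟩
  have hΓD : Γ t' < D t' := by
    refine lt_of_le_of_ne ?_ fun e => ?_
    · calc Γ t' ≤ Γ B := (hΓ B).incr (hA1.trans hAt'.le) ht'.2.le le_rfl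
        _ = D B := hDB.symm
        _ ≤ D t' := hD.anti (hQT.trans ht'.1.le) ht'.2.le le_rfl
    · have := hYpos t' (hA1.trans hAt'.le)
      rw [e] at this
      linarith
  obtain ⟨Λ, C, s0, T, hTs, hsA, hΛ, hC, hΛt, hCA, hCΛ, hlt, hCe⟩ := h.meet (E := C3 + 1)
    (by linarith) hAt' ((hΓ t').mono hA1 le_rfl) (hYpos A hA1) (by linarith) hDt.1 (by linarith)
    hΓD
  obtain ⟨P, hPT, hPA, hPlen, hPR, hP⟩ := h.segment (κ := 2 / a3) hM ha h2a
    (by rw [mul_div_cancel₀ _ ha3.ne']; norm_num) (hTs.trans_lt hsA) hC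
    (by rw [hCA]; exact huA) (by rw [hCA]; exact hYA)
    (by rw [hCA]; exact hCe.imp_right (fun e => by linarith))
  rw [mul_div_cancel₀ _ ha3.ne'] at hPlen
  rcases le_or_gt P s0 with hle | hgt
  · -- `Λ` meets the short segment of `C`, inside the box where `|Y₁| ≤ N`
    have h1 := hΛ.Y_mono h hσ le_rfl (hsA.trans hAt').le le_rfl
    rw [hΛt, ← hCΛ] at h1
    have h2 := hC.anti hTs hsA.le le_rfl
    have h3 := slope_lower (f := C) (k := -C3) hsA.le
      (fun r hr => (hC r ⟨hTs.trans hr.1, hr.2⟩).2)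
      (fun r hr => by
        have := h.c_anti (hP r ⟨hle.trans_lt hr.1, hr.2.le⟩).2.le
        linarith)
    rw [hCA] at h2 h3
    have h4 := hN (s0, C s0) ⟨⟨by linarith, hsA.le⟩, h2, by nlinarith⟩
    rw [Real.norm_eq_abs] at h4
    linarith [(abs_le.1 h4).1]
  · have hRAB : R p u v 1 (A, C A) = R p u v 1 (B, D B) := by
      rw [hCA, hDB]
      exact (hΓ B).R_const h hσ hA1 (by linarith) le_rfl
    have := h.quadrilateral (m := R p u v 1 (A, C A) - η) (P := P) hsA hAt' ht'.2
      (hC.mono hTs le_rfl) ((hΓ B).mono hA1 le_rfl) hΛ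
      (hD.mono (hQT.trans ht'.1.le) le_rfl) hCA hCΛ hΛt hDB hlt
      (fun t ht => by rw [hRAB]; exact (hQ t ⟨ht'.1.trans_le ht.1, ht.2⟩).1)
      ⟨hgt.le, hPA.le⟩
    linarith

/-! ### Reflection and conclusion -/

lemma dt_reflect {f : ℝ × ℝ → ℝ} (hf : Differentiable ℝ f) (z : ℝ × ℝ) :
    dt (fun z => f (z.1, -z.2)) z = dt f (z.1, -z.2) := by
  have hd : DifferentiableAt ℝ (fun z : ℝ × ℝ => f (z.1, -z.2)) (z.1, z.2) := by fun_prop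
  exact (hasDerivAt_dt hd).unique (hasDerivAt_dt (hf (z.1, -z.2)))

lemma dx_reflect {f : ℝ × ℝ → ℝ} (hf : Differentiable ℝ f) (z : ℝ × ℝ) :
    dx (fun z => f (z.1, -z.2)) z = -dx f (z.1, -z.2) := by
  have hd : DifferentiableAt ℝ (fun z : ℝ × ℝ => f (z.1, -z.2)) (z.1, z.2) := by fun_prop
  refine (hasDerivAt_dx hd).unique ?_
  exact ((hasDerivAt_dx (hf (z.1, -z.2))).comp z.2 (hasDerivAt_neg z.2)).congr_deriv (by ring)

/-- The p-system is invariant under `x ↦ -x`, `v ↦ -v`, which exchanges the two families. -/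
lemma Sol.reflect (h : Sol p u v) :
    Sol p (fun z => u (z.1, -z.2)) (fun z => (fun z => -v z) (z.1, -z.2)) := by
  have hdu : Differentiable ℝ u := h.du
  have hdv : Differentiable ℝ fun z => -v z := fun z => (h.dv z).fun_neg
  have e1 : ∀ z, dt (fun z => -v z) z = -dt v z := fun z => by
    unfold dt; rw [fderiv_fun_neg]; rfl
  have e2 : ∀ z, dx (fun z => -v z) z = -dx v z := fun z => by
    unfold dx; rw [fderiv_fun_neg]; rfl
  refine ⟨h.hp, h.conv, h.p0, h.hu.comp (contDiff_fst.prodMk contDiff_snd.neg),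
    h.hv.neg.comp (contDiff_fst.prodMk contDiff_snd.neg), fun z => ?_, fun z => ?_⟩
  · rw [dt_reflect hdu, dx_reflect hdv, e2, h.eq1, neg_neg]
  · rw [dt_reflect hdv, dx_reflect hdu, e1, h.eq2]
    ring

lemma Sol.W_reflect (h : Sol p u v) (z : ℝ × ℝ) :
    W p (fun z => u (z.1, -z.2)) (fun z => (fun z => -v z) (z.1, -z.2)) 1 z =
      W p u v (-1) (z.1, -z.2) := by
  have e2 : ∀ z, dx (fun z => -v z) z = -dx v z := fun z => by
    unfold dx; rw [fderiv_fun_neg]; rfl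
  unfold W
  rw [dx_reflect (f := u) h.du, dx_reflect (f := fun z => -v z) (fun z => (h.dv z).fun_neg), e2]
  ring

lemma Sol.of_pSystem (hp : ContDiff ℝ 2 p) (hconv : ∀ w : ℝ, 0 < deriv (deriv p) w)
    (hp'0 : deriv p 0 = 0) (hu : ContDiff ℝ 2 u) (hv : ContDiff ℝ 2 v)
    (hsys : PSystem p u v univ) : Sol p u v := by
  have hdu : Differentiable ℝ u := hu.differentiable (by norm_num)
  have hdv : Differentiable ℝ v := hv.differentiable (by norm_num)
  refine ⟨hp, hconv, hp'0, hu, hv, fun z => ?_, fun z => ?_⟩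
  · have := (hsys z (mem_univ z)).1
    rw [(hasDerivAt_dt (hdu (z.1, z.2))).deriv, (hasDerivAt_dx (hdv (z.1, z.2))).deriv] at this
    exact this
  · have := (hsys z (mem_univ z)).2
    rw [(hasDerivAt_dt (hdv (z.1, z.2))).deriv] at this
    exact this.trans (((hp.differentiable (by norm_num) (u (z.1, z.2))).hasDerivAt).comp z.2
      (hasDerivAt_dx (hdu (z.1, z.2)))).deriv

lemma Sol.deriv_R (h : Sol p u v) (ε t y : ℝ) :
    deriv (fun y => v (t, y) - ε * qfun p (u (t, y))) y = W p u v ε (t, y) := by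
  refine ((hasDerivAt_dx (h.dv (t, y))).sub
    (((h.hasDerivAt_q (u (t, y))).comp y (hasDerivAt_dx (h.du (t, y)))).const_mul ε)).deriv.trans ?_
  unfold W
  ring

end

end PSys

/-- Lemma 2.1(2), forward time: along a characteristic curve of the `i`-th
eigenvalue (`ε = 1` for `i = 1`, `ε = -1` for `i = 2`, eigenvalue
`λᵢ(u) = ε√(-p'(u))`, Riemann invariant `rᵢ = v - ε·q(u)`) defined on all of
`[t₀, ∞)`, either `∂rᵢ/∂x (t, x(t)) ≤ 0` for all `t ≥ t₀`, or
`-u(t, x(t)) → +∞` as `t → +∞`. -/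
theorem psystem_characteristic_semiinfinite_forward
    (p : ℝ → ℝ) (hp : ContDiff ℝ 2 p) (hconv : ∀ w : ℝ, 0 < deriv (deriv p) w)
    (hp0 : p 0 = 0) (hp'0 : deriv p 0 = 0)
    (u v : ℝ × ℝ → ℝ) (hu : ContDiff ℝ 2 u) (hv : ContDiff ℝ 2 v)
    (hsys : PSystem p u v Set.univ)
    (ε : ℝ) (hε : ε = 1 ∨ ε = -1)
    (t₀ : ℝ) (x : ℝ → ℝ)
    (hhyp : ∀ t, t₀ ≤ t → u (t, x t) < 0)
    (hchar : ∀ t, t₀ ≤ t →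
      HasDerivAt x (ε * Real.sqrt (-(deriv p (u (t, x t))))) t) :
    (∀ t, t₀ ≤ t → deriv (fun y => v (t, y) - ε * qfun p (u (t, y))) (x t) ≤ 0) ∨
      Filter.Tendsto (fun t => -u (t, x t)) Filter.atTop Filter.atTop := by
  by_contra hcon
  push Not at hcon
  obtain ⟨⟨t1, ht1, hpos⟩, hnot⟩ := hcon
  have h := PSys.Sol.of_pSystem hp hconv hp'0 hu hv hsys
  rw [h.deriv_R] at hpos
  refine hnot ?_
  rcases hε with rfl | rfl
  · exact h.tendsto_of_pos (t1 := t1)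
      (fun b t ht => ⟨hhyp t (ht1.trans ht.1), hchar t (ht1.trans ht.1)⟩)
      ((h.Y_pos_iff (hhyp t1 ht1)).2 hpos)
  · have key := h.reflect.tendsto_of_pos (Γ := fun t => -x t) (t1 := t1)
      (fun b t ht => ?_) ((h.reflect.Y_pos_iff ?_).2 ?_)
    · simpa only [neg_neg] using key
    · simp only [neg_neg]
      exact ⟨hhyp t (ht1.trans ht.1),
        (hchar t (ht1.trans ht.1)).fun_neg.congr_deriv (by unfold PSys.c; ring)⟩
    · simpa only [neg_neg] using hhyp t1 ht1
    · rw [h.W_reflect]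
      simpa only [neg_neg] using hpos
end

section
/- Let (u, v) be a C² solution of the p-system and let x : I → ℝ be a characteristic curve of the first eigenvalue. Define along the curve β₁(t) = (∂r₁/∂x)(t, x(t)) · (−p'(u(t, x(t))))^{1/4} and k(t) = −p''(u(t, x(t))) / (4(−p'(u(t, x(t))))^{5/4}). Then β₁ is differentiable on I and satisfies the Riccati equation β₁'(t) + k(t) β₁(t)² = 0 for all t ∈ I. -/
/-- Partial derivative of `f` in the constant direction `e`; the variables are `(t, x)`, so
`e = (1, 0)` gives `∂ₜ` and `e = (0, 1)` gives `∂ₓ`. -/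
noncomputable def pd (e : ℝ × ℝ) (f : ℝ × ℝ → ℝ) (z : ℝ × ℝ) : ℝ := fderiv ℝ f z e

lemma hasDerivAt_x {f : ℝ × ℝ → ℝ} {z : ℝ × ℝ} (hf : DifferentiableAt ℝ f z) :
    HasDerivAt (fun y => f (z.1, y)) (pd (0, 1) f z) z.2 :=
  HasFDerivAt.comp_hasDerivAt (f := fun y : ℝ => (z.1, y)) z.2 hf.hasFDerivAt
    ((hasDerivAt_const z.2 z.1).prodMk (hasDerivAt_id z.2))

lemma hasDerivAt_t {f : ℝ × ℝ → ℝ} {z : ℝ × ℝ} (hf : DifferentiableAt ℝ f z) :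
    HasDerivAt (fun s => f (s, z.2)) (pd (1, 0) f z) z.1 :=
  HasFDerivAt.comp_hasDerivAt (f := fun s : ℝ => (s, z.2)) z.1 hf.hasFDerivAt
    ((hasDerivAt_id z.1).prodMk (hasDerivAt_const z.1 z.2))

lemma hasDerivAt_curve {f : ℝ × ℝ → ℝ} {x : ℝ → ℝ} {t l : ℝ}
    (hf : DifferentiableAt ℝ f (t, x t)) (hx : HasDerivAt x l t) :
    HasDerivAt (fun s => f (s, x s))
      (pd (1, 0) f (t, x t) + l * pd (0, 1) f (t, x t)) t := by
  have h := HasFDerivAt.comp_hasDerivAt (f := fun s : ℝ => (s, x s)) t hf.hasFDerivAt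
    ((hasDerivAt_id t).prodMk hx)
  have e : ((1 : ℝ), l) = (1, 0) + l • ((0 : ℝ), (1 : ℝ)) := by simp
  rw [e, map_add, map_smul] at h
  exact h

lemma differentiable_pd {f : ℝ × ℝ → ℝ} (hf : ContDiff ℝ 2 f) (e : ℝ × ℝ) :
    Differentiable ℝ (pd e f) :=
  ((hf.fderiv_right (m := 1) (by norm_num)).clm_apply contDiff_const).differentiable (by norm_num)

lemma pd_comm {f : ℝ × ℝ → ℝ} (hf : ContDiff ℝ 2 f) (a b z : ℝ × ℝ) :
    pd a (pd b f) z = pd b (pd a f) z := by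
  have hd : DifferentiableAt ℝ (fderiv ℝ f) z :=
    ((hf.fderiv_right (m := 1) (by norm_num)).differentiable (by norm_num)) z
  have key : ∀ a b : ℝ × ℝ, pd a (pd b f) z = fderiv ℝ (fderiv ℝ f) z a b := by
    intro a b
    have h := hd.hasFDerivAt.clm_apply (hasFDerivAt_const b z)
    unfold pd
    rw [h.fderiv]
    simp
  rw [key, key]
  exact (hf.contDiffAt.isSymmSndFDerivAt (by simp)) a b

lemma hasDerivAt_qfun {p : ℝ → ℝ} (hp : Continuous (deriv p)) (w : ℝ) :
    HasDerivAt (qfun p) (-Real.sqrt (-(deriv p w))) w := by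
  have hc : Continuous fun s => Real.sqrt (-(deriv p s)) := hp.neg.sqrt
  exact intervalIntegral.integral_hasDerivAt_left (hc.intervalIntegrable _ _)
    hc.stronglyMeasurable.stronglyMeasurableAtFilter hc.continuousAt

/-- `∂ₓ r₁ = vₓ + λ uₓ`. Outside the hyperbolic region this still holds, with the junk value
`√(-p'(u)) = 0` entering both `q` and the right-hand side. -/
lemma deriv_riemann_invariant {p : ℝ → ℝ} (hp : Continuous (deriv p)) {u v : ℝ × ℝ → ℝ}
    (hu : Differentiable ℝ u) (hv : Differentiable ℝ v) (t y : ℝ) :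
    deriv (fun y => v (t, y) - qfun p (u (t, y))) y =
      pd (0, 1) v (t, y) + Real.sqrt (-(deriv p (u (t, y)))) * pd (0, 1) u (t, y) := by
  have h1 := hasDerivAt_x (hv (t, y))
  have h2 := hasDerivAt_x (hu (t, y))
  have h3 := HasDerivAt.comp (h₂ := qfun p) y (hasDerivAt_qfun hp (u (t, y))) h2
  have h4 := h1.sub h3
  refine (h4.deriv : _).trans ?_
  ring

/-- The Riccati equation along a characteristic of the first eigenvalue
`λ₁(u) = √(-p'(u))`: with `β₁(t) = (∂r₁/∂x)(t,x(t))·(-p'(u))^{1/4}` and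
`k(t) = -p''(u)/(4(-p'(u))^{5/4})` along the curve (where `r₁ = v - q(u)`),
`β₁` is differentiable and `β₁' + k·β₁² = 0` on `I`. -/
theorem psystem_riccati_first_eigenvalue
    (p : ℝ → ℝ) (hp : ContDiff ℝ 2 p) (hconv : ∀ w : ℝ, 0 < deriv (deriv p) w)
    (hp0 : p 0 = 0) (hp'0 : deriv p 0 = 0)
    (u v : ℝ × ℝ → ℝ) (hu : ContDiff ℝ 2 u) (hv : ContDiff ℝ 2 v)
    (hsys : PSystem p u v Set.univ)
    (I : Set ℝ) (hI : I.OrdConnected) (x : ℝ → ℝ)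
    (hhyp : ∀ t ∈ I, u (t, x t) < 0)
    (hchar : ∀ t ∈ I, HasDerivAt x (Real.sqrt (-(deriv p (u (t, x t))))) t)
    (β₁ k : ℝ → ℝ)
    (hβ₁ : β₁ = fun t => deriv (fun y => v (t, y) - qfun p (u (t, y))) (x t) *
      (-(deriv p (u (t, x t)))) ^ ((1:ℝ)/4))
    (hk : k = fun t => -(deriv (deriv p) (u (t, x t))) /
      (4 * (-(deriv p (u (t, x t)))) ^ ((5:ℝ)/4))) :
    ∀ t ∈ I, HasDerivAt β₁ (-(k t * β₁ t ^ 2)) t := by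
  intro t ht
  have hdp : ContDiff ℝ 1 (deriv p) := by
    have h : ContDiff ℝ (1 + 1) p := by norm_num; exact hp
    exact h.deriv'
  have hpd : Differentiable ℝ p := hp.differentiable (by norm_num)
  have hpd' : Differentiable ℝ (deriv p) := hdp.differentiable (by norm_num)
  have hud : Differentiable ℝ u := hu.differentiable (by norm_num)
  have hvd : Differentiable ℝ v := hv.differentiable (by norm_num)
  have hneg : deriv p (u (t, x t)) < 0 := by
    rw [← hp'0]
    exact strictMono_of_deriv_pos hconv (hhyp t ht)
  -- the system in terms of partial derivatives, as identities between functions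
  have e1 : pd (1, 0) u = fun z => -pd (0, 1) v z := by
    funext z
    have h := (hsys z trivial).1
    rwa [(hasDerivAt_t (hud z)).deriv, (hasDerivAt_x (hvd z)).deriv] at h
  have e2 : pd (1, 0) v = fun z => deriv p (u z) * pd (0, 1) u z := by
    funext z
    have h := (hsys z trivial).2
    have hc : HasDerivAt (fun y => p (u (z.1, y))) (deriv p (u z) * pd (0, 1) u z) z.2 :=
      HasDerivAt.comp (h₂ := p) z.2 (hpd (u z)).hasDerivAt (hasDerivAt_x (hud z))
    rwa [(hasDerivAt_t (hvd z)).deriv, hc.deriv] at h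
  -- `uₓₜ = -vₓₓ`
  have m1 : pd (1, 0) (pd (0, 1) u) (t, x t) = -pd (0, 1) (pd (0, 1) v) (t, x t) := by
    rw [pd_comm hu, e1]
    exact (hasDerivAt_x (z := (t, x t)) ((differentiable_pd hv (0, 1)).neg _)).unique
      (hasDerivAt_x (z := (t, x t)) (differentiable_pd hv (0, 1) _)).neg
  -- `vₓₜ = p''(u) uₓ² + p'(u) uₓₓ`
  have m2 : pd (1, 0) (pd (0, 1) v) (t, x t) =
      deriv (deriv p) (u (t, x t)) * pd (0, 1) u (t, x t) * pd (0, 1) u (t, x t) +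
        deriv p (u (t, x t)) * pd (0, 1) (pd (0, 1) u) (t, x t) := by
    rw [pd_comm hv, e2]
    have hc := HasDerivAt.comp (h₂ := deriv p) (x t) (hpd' (u (t, x t))).hasDerivAt
      (hasDerivAt_x (hud (t, x t)))
    exact (hasDerivAt_x (z := (t, x t))
      (((hpd'.comp hud).mul (differentiable_pd hu (0, 1))) _)).unique
      (hc.mul (hasDerivAt_x (z := (t, x t)) (differentiable_pd hu (0, 1) _)))
  have hx := hchar t ht
  have dux := hasDerivAt_curve (differentiable_pd hu (0, 1) (t, x t)) hx
  have dvx := hasDerivAt_curve (differentiable_pd hv (0, 1) (t, x t)) hx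
  have dP := (HasDerivAt.comp (h₂ := deriv p) t (hpd' (u (t, x t))).hasDerivAt
    (hasDerivAt_curve (hud (t, x t)) hx)).neg
  have hPpos : 0 < -(deriv p (u (t, x t))) := by linarith
  have dS := dP.sqrt hPpos.ne'
  have dR := dP.rpow_const (p := (1 : ℝ) / 4) (Or.inl hPpos.ne')
  have hβ : β₁ = fun s => (pd (0, 1) v (s, x s) +
      Real.sqrt (-(deriv p (u (s, x s)))) * pd (0, 1) u (s, x s)) *
        (-(deriv p (u (s, x s)))) ^ ((1:ℝ)/4) := by
    rw [hβ₁]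
    funext s
    rw [deriv_riemann_invariant hdp.continuous hud hvd]
  have main := (dvx.add (dS.mul dux)).mul dR
  rw [hβ, hk]
  refine main.congr_deriv ?_
  simp only [Pi.add_apply, Pi.mul_apply, Pi.neg_apply, Function.comp_apply]
  rw [m1, m2, e1]
  -- all the powers of `-p'(u)` are expressed through its fourth root `m`
  obtain ⟨m, hm, hm4⟩ : ∃ m : ℝ, 0 < m ∧ -(deriv p (u (t, x t))) = m ^ 4 :=
    ⟨(-(deriv p (u (t, x t)))) ^ ((1 : ℝ) / 4), Real.rpow_pos_of_pos hPpos _, by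
      rw [← Real.rpow_natCast, ← Real.rpow_mul hPpos.le]; norm_num⟩
  have hm4' : deriv p (u (t, x t)) = -m ^ 4 := by linarith
  have hs : Real.sqrt (m ^ 4) = m ^ 2 := by
    rw [show m ^ 4 = (m ^ 2) ^ 2 by ring]
    exact Real.sqrt_sq (by positivity)
  have hr : ∀ a : ℝ, (m ^ 4) ^ a = m ^ (4 * a) := by
    intro a
    rw [← Real.rpow_natCast, ← Real.rpow_mul hm.le]
    norm_num
  have hr1 : (m ^ 4) ^ ((1 : ℝ) / 4) = m := by rw [hr]; norm_num
  have hr5 : (m ^ 4) ^ ((5 : ℝ) / 4) = m ^ 5 := by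
    rw [hr, ← Real.rpow_natCast]; norm_num
  have hr3 : (m ^ 4) ^ ((1 : ℝ) / 4 - 1) = (m ^ 3)⁻¹ := by
    rw [hr, ← Real.rpow_natCast, ← Real.rpow_neg hm.le]; norm_num
  simp only [hm4', neg_neg, hs, hr1, hr5, hr3]
  field_simp
  ring
end

section
/- Let p : ℝ → ℝ be C² with p''(u) > 0 for all u, p(0) = 0 and p'(0) = 0. Let t₀ < t₊ < ∞, let C₁ > 0, and let w : [t₀, t₊) → ℝ be continuous with w(t) < 0 and |w(t)| ≤ C₁(t₊ − t) for all t ∈ [t₀, t₊). Then the integral ∫_{t₀}^{t₊} p''(w(s)) / (4(−p'(w(s)))^{5/4}) ds diverges to +∞. -/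
/-!
The values of `w` lie in the compact interval `K = [-C₁ (tp - t₀), 0]`, on which the continuous
positive function `p''` satisfies `m ≤ p'' ≤ M` for some `0 < m`, `0 < M`. Since `p'(0) = 0`, the
mean value theorem gives `0 < -p'(w s) ≤ M |w s| ≤ A (tp - s)` with `A = M C₁`. Writing
`x ^ (5/4) = x ^ (1/4) * x`, the integrand is therefore at least `c / (tp - s)` for a constant
`c > 0`, and `∫ c / (tp - s)` diverges logarithmically at `tp`. (The sharper lower bound
`(tp - s) ^ (-5/4)` is not needed.)
-/

/-- A function that is continuous on `[a, b)` and bounded below there by `c / (b - s)`, `c > 0`,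
has a divergent integral at `b`. -/
lemma tendsto_integral_atTop_of_inv_le {f : ℝ → ℝ} {a b c : ℝ} (hab : a < b) (hc : 0 < c)
    (hf : ContinuousOn f (Set.Ico a b)) (hle : ∀ s ∈ Set.Ico a b, c * (b - s)⁻¹ ≤ f s) :
    Filter.Tendsto (fun t => ∫ s in a..t, f s) (nhdsWithin b (Set.Iio b)) Filter.atTop := by
  have hlog : Filter.Tendsto (fun t => c * (Real.log (b - a) - Real.log (b - t)))
      (nhdsWithin b (Set.Iio b)) Filter.atTop := by
    have h0 : Filter.Tendsto (fun t => b - t) (nhdsWithin b (Set.Iio b))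
        (nhdsWithin 0 (Set.Ioi 0)) := by
      refine tendsto_nhdsWithin_iff.2 ⟨?_, ?_⟩
      · have : Filter.Tendsto (fun t => b - t) (nhds b) (nhds (b - b)) :=
          (continuous_const.sub continuous_id).tendsto b
        rw [sub_self] at this
        exact this.mono_left nhdsWithin_le_nhds
      · filter_upwards [self_mem_nhdsWithin] with t ht
        exact sub_pos.2 (Set.mem_Iio.1 ht)
    have h1 := Filter.tendsto_neg_atBot_atTop.comp (Real.tendsto_log_nhdsGT_zero.comp h0)
    have h2 := Filter.tendsto_atTop_add_const_left _ (Real.log (b - a)) h1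
    exact (h2.const_mul_atTop hc).congr fun t => by simp [sub_eq_add_neg]
  refine Filter.tendsto_atTop_mono' _ ?_ hlog
  filter_upwards [Ioo_mem_nhdsLT hab] with t ht
  have hsub : Set.Icc a t ⊆ Set.Ico a b := fun s hs => ⟨hs.1, hs.2.trans_lt ht.2⟩
  have hcont : ContinuousOn (fun s => c * (b - s)⁻¹) (Set.Icc a t) :=
    continuousOn_const.mul ((continuousOn_const.sub continuousOn_id).inv₀ fun s hs =>
      (sub_pos.2 (hsub hs).2).ne')
  have hint : ∫ s in a..t, c * (b - s)⁻¹ = c * (Real.log (b - a) - Real.log (b - t)) := by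
    rw [intervalIntegral.integral_const_mul,
      intervalIntegral.integral_comp_sub_left (fun x => x⁻¹) b,
      integral_inv_of_pos (sub_pos.2 ht.2) (sub_pos.2 hab),
      Real.log_div (sub_pos.2 hab).ne' (sub_pos.2 ht.2).ne']
  rw [← hint]
  exact intervalIntegral.integral_mono_on ht.1.le (hcont.intervalIntegrable_of_Icc ht.1.le)
    ((hf.mono hsub).intervalIntegrable_of_Icc ht.1.le) fun s hs => hle s (hsub hs)

/-- Divergence of the genuine-nonlinearity integral near the boundary of the
hyperbolic region: if `w < 0` is continuous on `[t₀, t₊)` with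
`|w(t)| ≤ C₁(t₊ - t)`, then `∫_{t₀}^{t₊} p''(w(s))/(4(-p'(w(s)))^{5/4}) ds = +∞`. -/
theorem genuine_nonlinearity_integral_diverges
    (p : ℝ → ℝ) (hp : ContDiff ℝ 2 p) (hconv : ∀ w : ℝ, 0 < deriv (deriv p) w)
    (hp0 : p 0 = 0) (hp'0 : deriv p 0 = 0)
    (t₀ tp C₁ : ℝ) (ht : t₀ < tp) (hC₁ : 0 < C₁)
    (w : ℝ → ℝ) (hw : ContinuousOn w (Set.Ico t₀ tp))
    (hneg : ∀ t ∈ Set.Ico t₀ tp, w t < 0)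
    (hbound : ∀ t ∈ Set.Ico t₀ tp, |w t| ≤ C₁ * (tp - t)) :
    Filter.Tendsto
      (fun t => ∫ s in t₀..t,
        deriv (deriv p) (w s) / (4 * (-(deriv p (w s))) ^ ((5:ℝ)/4)))
      (nhdsWithin tp (Set.Iio tp)) Filter.atTop := by
  have hp1 : ContDiff ℝ 1 (deriv p) := by
    have h : ContDiff ℝ (1 + 1) p := by simpa [one_add_one_eq_two] using hp
    exact (contDiff_succ_iff_deriv.1 h).2.2
  have hd : Differentiable ℝ (deriv p) := hp1.differentiable one_ne_zero
  have hc2 : Continuous (deriv (deriv p)) := hp1.continuous_deriv le_rfl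
  have hT : 0 < tp - t₀ := sub_pos.2 ht
  have hK : (Set.Icc (-(C₁ * (tp - t₀))) 0).Nonempty :=
    Set.nonempty_Icc.2 (neg_nonpos.2 (by positivity))
  obtain ⟨a, -, ha⟩ := isCompact_Icc.exists_isMinOn hK hc2.continuousOn
  obtain ⟨b, -, hb⟩ := isCompact_Icc.exists_isMaxOn hK hc2.continuousOn
  set m := deriv (deriv p) a with hm
  set M := deriv (deriv p) b with hM
  have hm0 : 0 < m := hconv a
  have hM0 : 0 < M := hconv b
  have hwK : ∀ s ∈ Set.Ico t₀ tp, w s ∈ Set.Icc (-(C₁ * (tp - t₀))) 0 := fun s hs => by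
    have h1 := hbound s hs
    have h2 : C₁ * (tp - s) ≤ C₁ * (tp - t₀) := by gcongr; exact hs.1
    exact ⟨by linarith [neg_abs_le (w s)], (hneg s hs).le⟩
  have hp' : ∀ s ∈ Set.Ico t₀ tp, 0 < -deriv p (w s) ∧
      -deriv p (w s) ≤ M * C₁ * (tp - s) := fun s hs => by
    have hws := hneg s hs
    obtain ⟨x, hx, hxe⟩ := exists_deriv_eq_slope (deriv p) hws hd.continuous.continuousOn
      hd.differentiableOn
    have hxM : deriv (deriv p) x ≤ M := hb ⟨(hwK s hs).1.trans hx.1.le, hx.2.le⟩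
    have hx0 := hconv x
    have hmv : -deriv p (w s) = deriv (deriv p) x * (-w s) := by
      rw [hxe, hp'0, zero_sub, zero_sub, div_mul_cancel₀ _ (neg_ne_zero.2 hws.ne)]
    have hw1 : -w s ≤ C₁ * (tp - s) := (neg_le_abs _).trans (hbound s hs)
    rw [hmv, mul_assoc]
    have hw0 : 0 < -w s := neg_pos.2 hws
    exact ⟨by positivity, by gcongr⟩
  set A := M * C₁ with hA
  have hA0 : 0 < A := by positivity
  set L := (A * (tp - t₀)) ^ ((1:ℝ)/4) with hL
  have hL0 : 0 < L := by positivity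
  refine tendsto_integral_atTop_of_inv_le (c := m / (4 * (L * A))) ht (by positivity) ?_ ?_
  · refine (hc2.comp_continuousOn hw).div (continuousOn_const.mul
      ((hd.continuous.comp_continuousOn hw).neg.rpow_const fun s hs => Or.inr (by norm_num))) ?_
    intro s hs
    have := (hp' s hs).1
    positivity
  · intro s hs
    obtain ⟨h1, h2⟩ := hp' s hs
    have hs0 : 0 < tp - s := sub_pos.2 hs.2
    have hpow : (-deriv p (w s)) ^ ((5:ℝ)/4) ≤ L * (A * (tp - s)) := by
      rw [show (5:ℝ)/4 = 1/4 + 1 by norm_num, Real.rpow_add_one h1.ne']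
      have h3 : A * (tp - s) ≤ A * (tp - t₀) := by gcongr; exact hs.1
      have h4 : (-deriv p (w s)) ^ ((1:ℝ)/4) ≤ L :=
        Real.rpow_le_rpow h1.le (h2.trans h3) (by norm_num)
      gcongr
    have hms : m ≤ deriv (deriv p) (w s) := ha (hwK s hs)
    calc m / (4 * (L * A)) * (tp - s)⁻¹ = m / (4 * (L * (A * (tp - s)))) := by
          field_simp
      _ ≤ _ := by
          have := hconv (w s)
          gcongr
end
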